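/- arXiv:1111.4319 — 3 statements merged into one kernel-verified Lean document; each statement's English description precedes it below -/
import Mathlib

section
/- 𝒞_2(8, 4, 3) ≤ 6897; that is, there exists a set of at most 6897 four-dimensional F_2-subspaces of F_2^8 such that every three-dimensional F_2-subspace of F_2^8 is contained in at least one of them. -/
open Module

/-- `coveringNumber F n k r` is the minimum number of `k`-dimensional `F`-linear subspaces
of `F^n` needed so that every `r`-dimensional subspace is contained in at least one of them. -/
noncomputable def coveringNumber (F : Type) [Field F] (n k r : ℕ) : ℕ :=
  sInf { m : ℕ | ∃ S : Finset (Submodule F (Fin n → F)),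
    S.card = m ∧
    (∀ X ∈ S, finrank F X = k) ∧
    (∀ Y : Submodule F (Fin n → F), finrank F Y = r → ∃ X ∈ S, Y ≤ X) }

/-!
Write the ambient space as `V × V` with `dim V = 4`. A three-dimensional subspace `P` with first
projection `U` and vertical part `W = {w | (0, w) ∈ P}` is the image of `U × W` under a shear
`(u, w) ↦ (u, w + h u)`, and `dim U + dim W = 3`. If `U = 0`, then `P` lies in `0 × V`. If `W = 0`,
then `P` lies in the graph of any linear map agreeing with `h` on `U`, and the `q ^ 12` linearized
polynomials of degree at most `q ^ 2` over the field with `q ^ 4` elements contain such a map. In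
the remaining cases `U` and `W` have dimensions one and two, in some order: a parallelism of `V`
provides a spread with a line `L ⊇ U` and a line `M ⊇ W`, and the shears of `L × M` are indexed by
the `q ^ 4` linear maps `L → V / M`. For `q = 2` a parallelism has 7 spreads of 5 lines, and
`2 ^ 12 + 1 + 7 * 5 ^ 2 * 2 ^ 4 = 6897`.
-/

section ShearedProduct

variable {R A B : Type*} [Ring R] [AddCommGroup A] [Module R A] [AddCommGroup B] [Module R B]

/-- The image of `U × W` under the shear `(a, b) ↦ (a, b + h a)`. Graphs of linear maps are the case
`U = ⊤`, `W = ⊥`. -/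
def shearedProd (U : Submodule R A) (W : Submodule R B) (h : A →ₗ[R] B) : Submodule R (A × B) :=
  (U.prod W).map ((LinearEquiv.refl R A).skewProd (LinearEquiv.refl R B) h).toLinearMap

theorem mem_shearedProd {U : Submodule R A} {W : Submodule R B} {h : A →ₗ[R] B} {v : A × B} :
    v ∈ shearedProd U W h ↔ v.1 ∈ U ∧ v.2 - h v.1 ∈ W := by
  rw [shearedProd, Submodule.mem_map_equiv]
  simp

theorem shearedProd_mono {U U' : Submodule R A} {W W' : Submodule R B} (hU : U ≤ U') (hW : W ≤ W')
    (h : A →ₗ[R] B) : shearedProd U W h ≤ shearedProd U' W' h :=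
  Submodule.map_mono (Submodule.prod_mono hU hW)

theorem shearedProd_congr {U : Submodule R A} {W : Submodule R B} {h h' : A →ₗ[R] B}
    (hh : ∀ u ∈ U, h u - h' u ∈ W) : shearedProd U W h = shearedProd U W h' := by
  ext v
  rw [mem_shearedProd, mem_shearedProd]
  refine and_congr_right fun hv => ?_
  rw [← sub_add_sub_cancel v.2 (h v.1) (h' v.1), W.add_mem_iff_left (hh _ hv)]

theorem eq_shearedProd_of_forall_mk_mem {P : Submodule R (A × B)} {h : A →ₗ[R] B}
    (hP : ∀ v ∈ P, (v.1, h v.1) ∈ P) :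
    P = shearedProd (P.map (LinearMap.fst R A B)) (P.comap (LinearMap.inr R A B)) h := by
  ext v
  have decomposition : v = (v.1, h v.1) + LinearMap.inr R A B (v.2 - h v.1) := by ext <;> simp
  rw [mem_shearedProd, Submodule.mem_comap]
  constructor
  · intro hv
    refine ⟨Submodule.mem_map_of_mem hv, ?_⟩
    exact (P.add_mem_iff_right (hP v hv)).1 (decomposition ▸ hv)
  · rintro ⟨⟨w, hw, hwv⟩, hv⟩
    rw [decomposition]
    exact P.add_mem (hwv ▸ hP w hw) hv

end ShearedProduct

section ShearedProductDimension

variable {K A B : Type*} [AddCommGroup A] [AddCommGroup B]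

theorem finrank_shearedProd [DivisionRing K] [Module K A] [Module K B]
    (U : Submodule K A) (W : Submodule K B) [FiniteDimensional K U] [FiniteDimensional K W]
    (h : A →ₗ[K] B) : finrank K (shearedProd U W h) = finrank K U + finrank K W := by
  have prod_eq_range : U.prod W = LinearMap.range (U.subtype.prodMap W.subtype) := by
    rw [LinearMap.range_prodMap, Submodule.range_subtype, Submodule.range_subtype]
  rw [shearedProd, LinearEquiv.finrank_map_eq, prod_eq_range, LinearMap.finrank_range_of_inj
    (Subtype.val_injective.prodMap Subtype.val_injective), finrank_prod]

theorem exists_linearMap_forall_mk_mem [DivisionRing K] [Module K A] [Module K B]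
    (P : Submodule K (A × B)) : ∃ h : A →ₗ[K] B, ∀ v ∈ P, (v.1, h v.1) ∈ P := by
  let f : P →ₗ[K] A := LinearMap.fst K A B ∘ₗ P.subtype
  obtain ⟨s, hs⟩ := f.rangeRestrict.exists_rightInverse_of_surjective f.range_rangeRestrict
  obtain ⟨h, hh⟩ := LinearMap.exists_extend (LinearMap.snd K A B ∘ₗ P.subtype ∘ₗ s)
  refine ⟨h, fun v hv => ?_⟩
  let u : LinearMap.range f := f.rangeRestrict ⟨v, hv⟩
  have hfst : (s u : A × B).1 = v.1 := congrArg Subtype.val (LinearMap.congr_fun hs u)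
  have hsnd : h v.1 = (s u : A × B).2 := LinearMap.congr_fun hh u
  rw [hsnd, ← hfst]
  exact (s u).2

variable [Field K] [Module K A] [Module K B]

theorem ncard_range_shearedProd_le [Finite K] (U : Submodule K A) (W : Submodule K B)
    [FiniteDimensional K U] [FiniteDimensional K B] :
    (Set.range (shearedProd U W)).ncard ≤
      Nat.card K ^ (finrank K U * (finrank K B - finrank K W)) := by
  let reduce : (A →ₗ[K] B) → (U →ₗ[K] B ⧸ W) := fun h => W.mkQ ∘ₗ h.domRestrict U
  have factors : (shearedProd U W).FactorsThrough reduce := fun h h' hh =>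
    shearedProd_congr fun u hu => (Submodule.Quotient.eq W).1 (LinearMap.congr_fun hh ⟨u, hu⟩)
  obtain ⟨φ, hφ⟩ := (Function.factorsThrough_iff _).1 factors
  have : Finite (U →ₗ[K] B ⧸ W) := Module.finite_of_finite K
  calc (Set.range (shearedProd U W)).ncard
      ≤ (Set.range φ).ncard := by
        rw [hφ]
        exact Set.ncard_le_ncard (Set.range_comp_subset_range _ _)
    _ ≤ Nat.card (U →ₗ[K] B ⧸ W) := Finite.card_range_le φ
    _ = Nat.card K ^ (finrank K U * (finrank K B - finrank K W)) := by
        rw [natCard_eq_pow_finrank (K := K), finrank_linearMap, Submodule.finrank_quotient]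

end ShearedProductDimension

section InterpolatingCodes

/-- A rank-metric code `C` is interpolating of strength `k` if its restriction to each
`k`-dimensional subspace takes all possible values; maximum rank distance codes have this
property. -/
def IsInterpolating {K A B : Type*} [Field K] [AddCommGroup A] [Module K A] [AddCommGroup B]
    [Module K B] (C : Set (A →ₗ[K] B)) (k : ℕ) : Prop :=
  ∀ U : Submodule K A, finrank K U = k → ∀ f : A →ₗ[K] B, ∃ g ∈ C, Set.EqOn g f U

theorem IsInterpolating.image_conj {K A B : Type*} [Field K] [AddCommGroup A] [Module K A]
    [AddCommGroup B] [Module K B] {C : Set (A →ₗ[K] A)} {k : ℕ} (hC : IsInterpolating C k)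
    (e : A ≃ₗ[K] B) : IsInterpolating (e.conj '' C) k := by
  intro U hU f
  obtain ⟨g, hg, hgf⟩ := hC (U.map (e.symm : B →ₗ[K] A))
    (by rw [LinearEquiv.finrank_map_eq, hU]) (e.symm.conj f)
  refine ⟨e.conj g, Set.mem_image_of_mem _ hg, fun u hu => ?_⟩
  simpa [LinearEquiv.conj_apply] using congrArg e (hgf (Submodule.mem_map_of_mem hu))

open FiniteField Polynomial

variable (K L : Type*) [Field K] [Fintype K] [Field L] [Algebra K L]

/-- A linear dependence is a polynomial of degree less than `#U` that vanishes on `U`. -/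
theorem linearIndependent_frobeniusAlgHom_pow_domRestrict (U : Submodule K L)
    [FiniteDimensional K U] :
    LinearIndependent L fun i : Fin (finrank K U) =>
      (frobeniusAlgHom K L ^ (i : ℕ)).toLinearMap.domRestrict U := by
  rw [Fintype.linearIndependent_iff]
  intro c hc i
  have hq : 1 < Fintype.card K := Fintype.one_lt_card
  have : Finite U := Module.finite_of_finite K
  have := Fintype.ofFinite U
  let p : L[X] := ∑ i : Fin (finrank K U), C (c i) * X ^ Fintype.card K ^ (i : ℕ)
  have eval_p : ∀ u : U, p.eval (u : L) = 0 := fun u => by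
    simpa [p, eval_finsetSum, coe_frobeniusAlgHom, pow_iterate] using LinearMap.congr_fun hc u
  have natDegree_p : p.natDegree < Fintype.card U := by
    rw [card_eq_pow_finrank (K := K)]
    exact Nat.lt_of_le_pred (by positivity) <| natDegree_sum_le_of_forall_le _ _ fun i _ =>
      Nat.le_pred_of_lt <|
        (natDegree_C_mul_X_pow_le _ _).trans_lt (Nat.pow_lt_pow_right hq i.isLt)
  have coeff_p : p.coeff (Fintype.card K ^ (i : ℕ)) = c i := by
    simp [p, finsetSum_coeff, coeff_X_pow, (Nat.pow_right_injective hq).eq_iff, Fin.val_inj]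
  rw [← coeff_p, eq_zero_of_natDegree_lt_card_of_eval_eq_zero p Subtype.val_injective eval_p
    natDegree_p, coeff_zero]

/-- The Gabidulin code of all linearized polynomials `∑ i < k, c i * X ^ q ^ i`, viewed as
`K`-linear endomorphisms of `L`, where `q` is the cardinality of `K`. -/
def gabidulinCode (k : ℕ) : Submodule L (L →ₗ[K] L) :=
  Submodule.span L (Set.range fun i : Fin k => (frobeniusAlgHom K L ^ (i : ℕ)).toLinearMap)

theorem card_gabidulinCode_le [Finite L] (k : ℕ) :
    Nat.card (gabidulinCode K L k) ≤ Nat.card L ^ k := by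
  have : FiniteDimensional L (gabidulinCode K L k) := .span_of_finite L (Set.finite_range _)
  rw [natCard_eq_pow_finrank (K := L)]
  exact Nat.pow_le_pow_right Nat.card_pos
    ((finrank_range_le_card _).trans_eq (Fintype.card_fin k))

theorem isInterpolating_gabidulinCode [FiniteDimensional K L] (k : ℕ) :
    IsInterpolating (gabidulinCode K L k : Set (L →ₗ[K] L)) k := by
  rintro U rfl f
  have span_eq_top := (linearIndependent_frobeniusAlgHom_pow_domRestrict K L
    U).span_eq_top_of_card_eq_finrank'
      (by rw [Fintype.card_fin, finrank_linearMap, finrank_self, mul_one])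
  have mem_span : f.domRestrict U ∈ (⊤ : Submodule L (U →ₗ[K] L)) := Submodule.mem_top
  rw [← span_eq_top, Submodule.mem_span_range_iff_exists_fun] at mem_span
  obtain ⟨c, hc⟩ := mem_span
  refine ⟨_, (Submodule.mem_span_range_iff_exists_fun L).2 ⟨c, rfl⟩, fun u hu => ?_⟩
  simpa [LinearMap.sum_apply] using LinearMap.congr_fun hc ⟨u, hu⟩

theorem exists_isInterpolating_ncard_le (K V : Type*) [Field K] [Finite K] [AddCommGroup V]
    [Module K V] [FiniteDimensional K V] [Nontrivial V] (k : ℕ) :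
    ∃ C : Set (V →ₗ[K] V), IsInterpolating C k ∧ C.ncard ≤ Nat.card K ^ (finrank K V * k) := by
  have := Fintype.ofFinite K
  obtain ⟨p, _⟩ := CharP.exists K
  have : Fact p.Prime := ⟨CharP.char_is_prime K p⟩
  have : NeZero (finrank K V) := ⟨finrank_pos.ne'⟩
  let L := FiniteField.Extension K p (finrank K V)
  let e : L ≃ₗ[K] V := .ofFinrankEq _ _ (finrank_extension K p _)
  refine ⟨_, (isInterpolating_gabidulinCode K L k).image_conj e, ?_⟩
  have : Finite (L →ₗ[K] L) := Module.finite_of_finite K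
  rw [pow_mul, ← natCard_extension K p]
  exact (Set.ncard_image_le (Set.toFinite _)).trans (card_gabidulinCode_le K L k)

end InterpolatingCodes

section LineResolutions

variable {K V ι κ : Type*} [Field K] [AddCommGroup V] [Module K V]

/-- A family of lines (two-dimensional subspaces) of `V`, arranged in rows `ℓ i` such that every
vector lies on a line of each row and any two vectors lie on a common line. A parallelism of the
projective space of `V`, whose rows are spreads partitioning the set of lines, is an example; the
disjointness of the lines in a row is not imposed. -/
structure IsLineResolution (ℓ : ι → κ → Submodule K V) : Prop where
  finrank_line : ∀ i j, finrank K (ℓ i j) = 2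
  exists_mem : ∀ i x, ∃ j, x ∈ ℓ i j
  exists_mem_mem : ∀ x y, ∃ i j, x ∈ ℓ i j ∧ y ∈ ℓ i j

namespace IsLineResolution

variable {ℓ : ι → κ → Submodule K V}

theorem exists_ge_of_finrank_eq_one (hℓ : IsLineResolution ℓ) (i : ι) {U : Submodule K V}
    (hU : finrank K U = 1) : ∃ j, U ≤ ℓ i j := by
  obtain ⟨u, -, hu⟩ := finrank_eq_one_iff'.1 hU
  obtain ⟨j, hj⟩ := hℓ.exists_mem i u
  refine ⟨j, fun v hv => ?_⟩
  obtain ⟨c, hc⟩ := hu ⟨v, hv⟩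
  have : v = c • (u : V) := congrArg Subtype.val hc.symm
  exact this ▸ (ℓ i j).smul_mem c hj

theorem exists_ge_of_finrank_eq_two (hℓ : IsLineResolution ℓ) {U : Submodule K V}
    (hU : finrank K U = 2) : ∃ i j, U ≤ ℓ i j := by
  have : FiniteDimensional K U := .of_finrank_pos (by omega)
  let b := finBasisOfFinrankEq K U hU
  obtain ⟨i, j, h₀, h₁⟩ := hℓ.exists_mem_mem (b 0) (b 1)
  refine ⟨i, j, fun v hv => ?_⟩
  have : v = b.repr ⟨v, hv⟩ 0 • (b 0 : V) + b.repr ⟨v, hv⟩ 1 • (b 1 : V) := by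
    have sum_repr := b.sum_repr ⟨v, hv⟩
    rw [Fin.sum_univ_two] at sum_repr
    exact congrArg Subtype.val sum_repr.symm
  exact this ▸ add_mem (Submodule.smul_mem _ _ h₀) (Submodule.smul_mem _ _ h₁)

theorem exists_ge_ge_of_finrank_add_finrank_eq_three (hℓ : IsLineResolution ℓ)
    {U W : Submodule K V} (hU : finrank K U ≠ 0) (hW : finrank K W ≠ 0)
    (hUW : finrank K U + finrank K W = 3) : ∃ i j k, U ≤ ℓ i j ∧ W ≤ ℓ i k := by
  obtain ⟨hU, hW⟩ | ⟨hU, hW⟩ : (finrank K U = 1 ∧ finrank K W = 2) ∨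
      (finrank K U = 2 ∧ finrank K W = 1) := by omega
  · obtain ⟨i, k, hk⟩ := hℓ.exists_ge_of_finrank_eq_two hW
    obtain ⟨j, hj⟩ := hℓ.exists_ge_of_finrank_eq_one i hU
    exact ⟨i, j, k, hj, hk⟩
  · obtain ⟨i, j, hj⟩ := hℓ.exists_ge_of_finrank_eq_two hU
    obtain ⟨k, hk⟩ := hℓ.exists_ge_of_finrank_eq_one i hW
    exact ⟨i, j, k, hj, hk⟩

end IsLineResolution

end LineResolutions

section DoubledDesign

variable {K V ι κ : Type*} [Field K] [AddCommGroup V] [Module K V]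

/-- The subspaces of `V × V` covering its three-dimensional subspaces: the graphs of the members
of `C`, the vertical copy of `V`, and all shears of products of two lines in the same row
of `ℓ`. -/
def doubledDesign (C : Set (V →ₗ[K] V)) (ℓ : ι → κ → Submodule K V) : Set (Submodule K (V × V)) :=
  shearedProd ⊤ ⊥ '' C ∪ {shearedProd ⊥ ⊤ 0} ∪
    ⋃ t : ι × κ × κ, Set.range (shearedProd (ℓ t.1 t.2.1) (ℓ t.1 t.2.2))

variable {C : Set (V →ₗ[K] V)} {ℓ : ι → κ → Submodule K V}

theorem finrank_of_mem_doubledDesign (hV : finrank K V = 4) (hℓ : IsLineResolution ℓ)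
    {X : Submodule K (V × V)} (hX : X ∈ doubledDesign C ℓ) : finrank K X = 4 := by
  have : FiniteDimensional K V := .of_finrank_pos (by omega)
  obtain (⟨g, -, rfl⟩ | rfl) | hX := hX
  · rw [finrank_shearedProd, finrank_top, finrank_bot, hV]
  · rw [finrank_shearedProd, finrank_top, finrank_bot, hV]
  · obtain ⟨⟨i, j, k⟩, h, rfl⟩ := Set.mem_iUnion.1 hX
    rw [finrank_shearedProd, hℓ.finrank_line, hℓ.finrank_line]

theorem exists_mem_doubledDesign_ge [FiniteDimensional K V] (hC : IsInterpolating C 3)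
    (hℓ : IsLineResolution ℓ) {P : Submodule K (V × V)} (hP : finrank K P = 3) :
    ∃ X ∈ doubledDesign C ℓ, P ≤ X := by
  obtain ⟨h, hh⟩ := exists_linearMap_forall_mk_mem P
  have hPh := eq_shearedProd_of_forall_mk_mem hh
  set U := P.map (LinearMap.fst K V V)
  set W := P.comap (LinearMap.inr K V V)
  have hUW : finrank K U + finrank K W = 3 := by rw [← finrank_shearedProd U W h, ← hPh, hP]
  rw [hPh]
  by_cases hU : finrank K U = 0
  · rw [Submodule.finrank_eq_zero] at hU
    refine ⟨_, .inl (.inr rfl), ?_⟩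
    rw [shearedProd_congr (h' := 0) (by simp [hU])]
    exact shearedProd_mono hU.le le_top 0
  by_cases hW : finrank K W = 0
  · obtain ⟨g, hg, hgh⟩ := hC U (by omega) h
    refine ⟨_, .inl (.inl ⟨g, hg, rfl⟩), ?_⟩
    rw [shearedProd_congr (h' := g) fun u hu => by simp [hgh hu]]
    exact shearedProd_mono le_top (Submodule.finrank_eq_zero.1 hW).le g
  obtain ⟨i, j, k, hj, hk⟩ := hℓ.exists_ge_ge_of_finrank_add_finrank_eq_three hU hW hUW
  exact ⟨_, .inr (Set.mem_iUnion.2 ⟨(i, j, k), h, rfl⟩), shearedProd_mono hj hk h⟩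

theorem ncard_doubledDesign_le [Finite K] [FiniteDimensional K V] [Finite ι] [Finite κ]
    (hℓ : IsLineResolution ℓ) :
    (doubledDesign C ℓ).ncard ≤ C.ncard + 1 +
      Nat.card ι * Nat.card κ ^ 2 * Nat.card K ^ (2 * (finrank K V - 2)) := by
  have := Fintype.ofFinite ι
  have := Fintype.ofFinite κ
  have : Finite (V →ₗ[K] V) := Module.finite_of_finite K
  have ncard_shears (t : ι × κ × κ) :
      (Set.range (shearedProd (ℓ t.1 t.2.1) (ℓ t.1 t.2.2))).ncard ≤
        Nat.card K ^ (2 * (finrank K V - 2)) := by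
    simpa only [hℓ.finrank_line] using ncard_range_shearedProd_le (ℓ t.1 t.2.1) (ℓ t.1 t.2.2)
  refine (Set.ncard_union_le _ _).trans (add_le_add ((Set.ncard_union_le _ _).trans ?_) ?_)
  · rw [Set.ncard_singleton]
    exact Nat.add_le_add_right (Set.ncard_image_le C.toFinite) 1
  · refine ((Set.ncard_iUnion_le_of_fintype _).trans
      (Finset.sum_le_card_nsmul _ _ _ fun t _ => ncard_shears t)).trans_eq ?_
    simp [Nat.card_eq_fintype_card, sq]

end DoubledDesign

theorem coveringNumber_le_ncard {K : Type} {V : Type*} [Field K] [AddCommGroup V] [Module K V]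
    [FiniteDimensional K V] {n k r : ℕ} (hV : finrank K V = n) {S : Set (Submodule K V)}
    (hS : S.Finite) (finrank_eq : ∀ X ∈ S, finrank K X = k)
    (covers : ∀ Y : Submodule K V, finrank K Y = r → ∃ X ∈ S, Y ≤ X) :
    coveringNumber K n k r ≤ S.ncard := by
  classical
  let e : V ≃ₗ[K] (Fin n → K) := .ofFinrankEq _ _ (by rw [hV, finrank_fin_fun])
  let T := hS.toFinset.image (Submodule.map (e : V →ₗ[K] Fin n → K))
  have card_T : T.card ≤ S.ncard :=
    Finset.card_image_le.trans_eq (Set.ncard_eq_toFinset_card S hS).symm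
  refine le_trans (Nat.sInf_le ⟨T, rfl, fun Z hZ => ?_, fun Y hY => ?_⟩) card_T
  · obtain ⟨X, hX, rfl⟩ := Finset.mem_image.1 hZ
    rw [LinearEquiv.finrank_map_eq, finrank_eq X (hS.mem_toFinset.1 hX)]
  · obtain ⟨X, hX, hYX⟩ := covers (Y.map (e.symm : (Fin n → K) →ₗ[K] V))
      (by rw [LinearEquiv.finrank_map_eq, hY])
    refine ⟨_, Finset.mem_image_of_mem _ (hS.mem_toFinset.2 hX), fun y hy => ?_⟩
    exact ⟨e.symm y, hYX (Submodule.mem_map_of_mem hy), e.apply_symm_apply y⟩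

theorem bound_8_4_3_general {K : Type} {V ι κ : Type*} [Field K] [Finite K] [AddCommGroup V]
    [Module K V] [Finite ι] [Finite κ] (hV : finrank K V = 4) {ℓ : ι → κ → Submodule K V}
    (hℓ : IsLineResolution ℓ) :
    coveringNumber K 8 4 3 ≤
      Nat.card K ^ 12 + 1 + Nat.card ι * Nat.card κ ^ 2 * Nat.card K ^ 4 := by
  have : FiniteDimensional K V := .of_finrank_pos (by omega)
  have : Nontrivial V := nontrivial_of_finrank_pos (R := K) (by omega)
  have : Finite (V × V) := Module.finite_of_finite K
  have hVV : finrank K (V × V) = 8 := by rw [finrank_prod, hV]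
  obtain ⟨C, hC, card_C⟩ := exists_isInterpolating_ncard_le K V 3
  calc coveringNumber K 8 4 3
      ≤ (doubledDesign C ℓ).ncard :=
        coveringNumber_le_ncard hVV (Set.toFinite _)
          (fun _ => finrank_of_mem_doubledDesign hV hℓ) fun _ => exists_mem_doubledDesign_ge hC hℓ
    _ ≤ C.ncard + 1 + Nat.card ι * Nat.card κ ^ 2 * Nat.card K ^ 4 := by
        simpa only [hV] using ncard_doubledDesign_le (C := C) hℓ
    _ ≤ Nat.card K ^ 12 + 1 + Nat.card ι * Nat.card κ ^ 2 * Nat.card K ^ 4 := by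
        rw [hV] at card_C
        gcongr

section BinaryParallelism

/-- The space `𝔽₂ × 𝔽₈`, where `(c, x₀, x₁, x₂)` stands for `(c, x₀ + x₁ α + x₂ α²)` with
`α³ = α + 1`. -/
abbrev BinarySpace : Type := ZMod 2 × ZMod 2 × ZMod 2 × ZMod 2

/-- The map `(c, x) ↦ (c, α x)`, of order seven, which permutes the spreads of the parallelism. -/
def mulRoot (v : BinarySpace) : BinarySpace :=
  (v.1, v.2.2.2, v.2.1 + v.2.2.2, v.2.2.1)

/-- Generators of the five lines of a spread invariant under the Frobenius `(c, x) ↦ (c, x ^ 2)`: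
the pairs `(1, 0), (0, 1)` and `(0, α), (0, α²)`, and the orbit of `(1, α²), (0, α³)`. -/
def baseSpread : Fin 5 → BinarySpace × BinarySpace :=
  ![((1, 0, 0, 0), (0, 1, 0, 0)),
    ((0, 0, 1, 0), (0, 0, 0, 1)),
    ((1, 0, 0, 1), (0, 1, 1, 0)),
    ((1, 0, 1, 1), (0, 1, 0, 1)),
    ((1, 0, 1, 0), (0, 1, 1, 1))]

/-- The parallelism of `PG(3, 2)` formed by the seven images of the base spread under the powers
of `mulRoot`. -/
def binaryParallelism (i : Fin 7) (j : Fin 5) : Submodule (ZMod 2) BinarySpace :=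
  Submodule.span (ZMod 2) {mulRoot^[i] (baseSpread j).1, mulRoot^[i] (baseSpread j).2}

theorem isLineResolution_binaryParallelism : IsLineResolution binaryParallelism where
  finrank_line i j := by
    have independent : ∀ (i : Fin 7) (j : Fin 5), LinearIndependent (ZMod 2)
        ![mulRoot^[i] (baseSpread j).1, mulRoot^[i] (baseSpread j).2] := by
      simp only [LinearIndependent.pair_iff]
      decide +kernel
    rw [binaryParallelism, ← Matrix.range_cons_cons_empty _ _ ![],
      finrank_span_eq_card (independent i j), Fintype.card_fin]
  exists_mem := by
    simp only [binaryParallelism, Submodule.mem_span_pair]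
    decide +kernel
  exists_mem_mem := by
    simp only [binaryParallelism, Submodule.mem_span_pair]
    decide +kernel

end BinaryParallelism

/-- $\mathcal{C}_2(8,4,3) \le 6897$. -/
theorem bound_8_4_3 : coveringNumber (ZMod 2) 8 4 3 ≤ 6897 := by
  simpa using bound_8_4_3_general (by simp) isLineResolution_binaryParallelism
end

section
/- Let n and k be integers with k ≥ 3 and n ≥ 2k. Suppose S is a q-covering design C_2(n−k+2, k, 3) (a finite set of k-dimensional subspaces of F_2^{n−k+2} covering all 3-dimensional subspaces), U_0 is an (n−k)-dimensional subspace of F_2^{n−k+2}, and U_1, U_2, U_3 are (n−k+1)-dimensional subspaces of F_2^{n−k+2} with U_i ∩ U_j = U_0 for all 1 ≤ i < j ≤ 3. For i = 0,1,2,3 let c_i be the number of elements X ∈ S with X ⊆ U_i, and assume c_1 ≤ c_2 ≤ c_3. Then 𝒞_2(n, k, 3) ≤ 2^{3(n−k)} + [k,2]_2 · (|S| − c_1 − c_2 − c_3 + 2c_0) + (2^k−1)·(c_1 − c_0) + 𝒞_2(n−k, k, 3), where [k,2]_2 = (2^k−1)(2^{k−1}−1)/3 is a Gaussian binomial coefficient.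 -/
open Module

/-!
Write `F ^ n` as `E × K` with `dim E = k` and `dim K = m = n - k`, and sort the `3`-dimensional
subspaces `Y` by the dimension of their projection to `E`. If the projection is injective on `Y`,
then `Y` lies in the graph of one of the `q ^ (3 * m)` codewords of a Gabidulin code. If it
vanishes on `Y`, then `Y` lies in `K`, where an optimal covering design takes care of it.

The remaining `Y` project to a point or a line of `E`, so `Y ≤ L × K` for some line `L`. On every
line `L` a point `δ L` is marked such that every point of `E` is the marked point of some line, and
the given design is copied to `L × K` with `U₀` going to `0 × K` and a fixed member `U i₀` of the
pencil going to `δ L × K`. If `Y` projects onto `L`, it lies in no member of the pencil, so the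
blocks contained in none of them suffice. If `Y` projects to a point, choose `L` with that point
marked: then `Y` lies in the copy of `U i₀` but not in that of `U₀`, so the only further blocks
needed are those contained in `U i₀` and not in `U₀`. The copies of these are taken for one line
per point rather than for all lines.
-/

section LinearAlgebra

variable {F V W : Type*} [Field F] [AddCommGroup V] [Module F V]
  [AddCommGroup W] [Module F W]

lemma finrank_map_eq_of_injective {f : V →ₗ[F] W} (hf : Function.Injective f)
    (X : Submodule F V) : finrank F (X.map f) = finrank F X :=
  (Submodule.equivMapOfInjective f hf X).finrank_eq.symm

lemma exists_span_singleton_le {X : Submodule F V} (hX : finrank F X ≠ 0) :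
    ∃ x ≠ 0, F ∙ x ≤ X := by
  obtain ⟨x, hx, hx₀⟩ := X.exists_mem_ne_zero_of_ne_bot (by rintro rfl; simp at hX)
  exact ⟨x, hx₀, (Submodule.span_singleton_le_iff_mem x X).2 hx⟩

variable [FiniteDimensional F V]

lemma exists_le_finrank_eq {d : ℕ} {Y : Submodule F V} (hY : finrank F Y ≤ d)
    (hd : d ≤ finrank F V) : ∃ X, Y ≤ X ∧ finrank F X = d := by
  induction d, hY using Nat.le_induction with
  | base => exact ⟨Y, le_rfl, rfl⟩
  | succ d _ ih =>
    obtain ⟨X, hYX, hX⟩ := ih (Nat.le_of_succ_le hd)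
    obtain ⟨v, -, hv⟩ := SetLike.exists_of_lt (Submodule.lt_top_of_finrank_lt_finrank (hX ▸ hd))
    exact ⟨X ⊔ F ∙ v, hYX.trans le_sup_left, by rw [Submodule.finrank_sup_span_singleton hv, hX]⟩

lemma finrank_map_add_finrank_ker_of_le (f : V →ₗ[F] W) {X : Submodule F V}
    (hX : LinearMap.ker f ≤ X) :
    finrank F (X.map f) + finrank F (LinearMap.ker f) = finrank F X := by
  rw [← LinearMap.range_domRestrict, ← LinearMap.finrank_range_add_finrank_ker (f.domRestrict X),
    LinearMap.ker_domRestrict]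
  exact congrArg _ (Submodule.submoduleOfEquivOfLe hX).finrank_eq.symm

lemma exists_linearEquiv_map_eq [FiniteDimensional F W] (hVW : finrank F V = finrank F W)
    {X : Submodule F V} {Y : Submodule F W} (hXY : finrank F X = finrank F Y) :
    ∃ e : V ≃ₗ[F] W, X.map e.toLinearMap = Y := by
  obtain ⟨X', hX'⟩ := X.exists_isCompl
  obtain ⟨Y', hY'⟩ := Y.exists_isCompl
  have hXY' : finrank F X' = finrank F Y' := by
    have := Submodule.finrank_add_eq_of_isCompl hX'
    have := Submodule.finrank_add_eq_of_isCompl hY'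
    lia
  let e := (X.prodEquivOfIsCompl X' hX').symm ≪≫ₗ
    ((LinearEquiv.ofFinrankEq X Y hXY).prodCongr (LinearEquiv.ofFinrankEq X' Y' hXY')) ≪≫ₗ
    Y.prodEquivOfIsCompl Y' hY'
  refine ⟨e, Submodule.eq_of_le_of_finrank_eq ?_ ((e.finrank_map_eq X).trans hXY)⟩
  rintro _ ⟨x, hx, rfl⟩
  simp [e, Submodule.prodEquivOfIsCompl_symm_apply_left X X' hX' ⟨x, hx⟩]

end LinearAlgebra

section Grassmannian

variable (F V : Type*) [Field F] [Finite F] [AddCommGroup V] [Module F V]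
  [FiniteDimensional F V]

/-- The Grassmannian: the set of all `r`-dimensional subspaces of `V`. -/
noncomputable def grassmannian (r : ℕ) : Finset (Submodule F V) :=
  have : Finite V := Module.finite_of_finite F
  (Set.toFinite {L : Submodule F V | finrank F L = r}).toFinset

variable {F V}

@[simp]
lemma mem_grassmannian {r : ℕ} {L : Submodule F V} :
    L ∈ grassmannian F V r ↔ finrank F L = r := by
  simp [grassmannian]

/-- Both sides count the ordered linearly independent `r`-tuples, which are the ordered bases of the
`r`-dimensional subspaces. -/
lemma card_grassmannian_mul {r : ℕ} (hr : r ≤ finrank F V) :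
    (grassmannian F V r).card * ∏ i : Fin r, (Nat.card F ^ r - Nat.card F ^ (i : ℕ)) =
      ∏ i : Fin r, (Nat.card F ^ finrank F V - Nat.card F ^ (i : ℕ)) := by
  have := Fintype.ofFinite F
  have : Finite V := Module.finite_of_finite F
  let incl : (Σ L : grassmannian F V r, {s : Fin r → L.1 // LinearIndependent F s}) →
      {s : Fin r → V // LinearIndependent F s} :=
    fun s ↦ ⟨s.1.1.subtype ∘ s.2.1, s.2.2.map' _ (Submodule.ker_subtype _)⟩
  have span_incl : ∀ s, Submodule.span F (Set.range (incl s).1) = s.1.1 := fun s ↦ by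
    refine Submodule.eq_of_le_of_finrank_eq (Submodule.span_le.2 ?_) ?_
    · rintro _ ⟨i, rfl⟩
      exact (s.2.1 i).2
    · rw [finrank_span_eq_card (incl s).2, Fintype.card_fin, mem_grassmannian.1 s.1.2]
  have incl_bijective : incl.Bijective := by
    refine ⟨fun s t hst ↦ ?_, fun s ↦ ?_⟩
    · obtain ⟨⟨L, hL⟩, s⟩ := s
      obtain ⟨⟨M, hM⟩, t⟩ := t
      obtain rfl : L = M :=
        (span_incl ⟨⟨L, hL⟩, s⟩).symm.trans (hst ▸ span_incl ⟨⟨M, hM⟩, t⟩)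
      congr 2
      ext i
      exact congrFun (congrArg Subtype.val hst) i
    · have hs : finrank F (Submodule.span F (Set.range s.1)) = r := by
        rw [finrank_span_eq_card s.2, Fintype.card_fin]
      exact ⟨⟨⟨_, mem_grassmannian.2 hs⟩, ⟨_, linearIndependent_span s.2⟩⟩, rfl⟩
  have card_bases (L : grassmannian F V r) : Nat.card {s : Fin r → L.1 // LinearIndependent F s} =
      ∏ i : Fin r, (Fintype.card F ^ r - Fintype.card F ^ (i : ℕ)) := by
    have hL := mem_grassmannian.1 L.2
    rw [card_linearIndependent hL.ge, hL]
  rw [← Fintype.card_eq_nat_card, ← card_linearIndependent hr,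
    ← Nat.card_eq_of_bijective _ incl_bijective, Nat.card_sigma]
  simp only [card_bases, Finset.sum_const, Finset.card_univ, Fintype.card_coe, smul_eq_mul]

lemma cast_card_grassmannian_one (hV : 1 ≤ finrank F V) :
    ((grassmannian F V 1).card : ℚ) =
      ((Nat.card F : ℚ) ^ finrank F V - 1) / ((Nat.card F : ℚ) - 1) := by
  have hq : (1 : ℚ) < Nat.card F := mod_cast Finite.one_lt_card
  have hcount := congrArg (Nat.cast : ℕ → ℚ) (card_grassmannian_mul hV)
  rw [eq_div_iff (sub_pos.2 hq).ne']
  simpa [Nat.cast_sub, Nat.one_le_pow, Nat.card_pos] using hcount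

lemma cast_card_grassmannian_two (hV : 2 ≤ finrank F V) :
    ((grassmannian F V 2).card : ℚ) =
      ((Nat.card F : ℚ) ^ finrank F V - 1) * ((Nat.card F : ℚ) ^ (finrank F V - 1) - 1) /
        (((Nat.card F : ℚ) - 1) * ((Nat.card F : ℚ) ^ 2 - 1)) := by
  have hcount := congrArg (Nat.cast : ℕ → ℚ) (card_grassmannian_mul hV)
  obtain ⟨d, hd⟩ : ∃ d, finrank F V = d + 1 := ⟨finrank F V - 1, by lia⟩
  have hq : (1 : ℚ) < Nat.card F := mod_cast Finite.one_lt_card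
  have hpow {j : ℕ} : ((Nat.card F ^ (j + 1) - 1 : ℕ) : ℚ) = (Nat.card F : ℚ) ^ (j + 1) - 1 := by
    rw [Nat.cast_sub (Nat.one_le_pow _ _ Nat.card_pos), Nat.cast_pow, Nat.cast_one]
  have hpow' {j : ℕ} : ((Nat.card F ^ (j + 1) - Nat.card F : ℕ) : ℚ) =
      Nat.card F * ((Nat.card F : ℚ) ^ j - 1) := by
    rw [Nat.cast_sub (Nat.le_self_pow (by simp) _), Nat.cast_pow]
    ring
  simp only [Fin.prod_univ_two, Fin.val_zero, Fin.val_one, pow_zero, pow_one, hd, Nat.cast_mul,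
    hpow, hpow'] at hcount
  rw [hd, Nat.add_sub_cancel, eq_div_iff (mul_pos (sub_pos.2 hq) (by nlinarith)).ne']
  refine mul_left_cancel₀ (zero_lt_one.trans hq).ne' ?_
  linear_combination hcount

end Grassmannian

section CoveringDesign

variable {F V W : Type*} [Field F] [AddCommGroup V] [Module F V]
  [AddCommGroup W] [Module F W] {k r : ℕ}

/-- A `q`-covering design: a set of `k`-dimensional subspaces of `V` such that every
`r`-dimensional subspace of `V` is contained in one of them. -/
structure IsCoveringDesign (k r : ℕ) (S : Finset (Submodule F V)) : Prop where
  finrank_eq : ∀ X ∈ S, finrank F X = k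
  exists_le : ∀ Y : Submodule F V, finrank F Y = r → ∃ X ∈ S, Y ≤ X

lemma IsCoveringDesign.map {S : Finset (Submodule F V)} (hS : IsCoveringDesign k r S)
    (e : V ≃ₗ[F] W) :
    IsCoveringDesign k r (S.map (Submodule.orderIsoMapComap e).toEmbedding) where
  finrank_eq := by
    simp only [Finset.forall_mem_map]
    exact fun X hX ↦ (e.finrank_map_eq X).trans (hS.finrank_eq X hX)
  exists_le Y hY := by
    obtain ⟨X, hX, hYX⟩ := hS.exists_le (Y.map e.symm.toLinearMap)
      ((e.symm.finrank_map_eq Y).trans hY)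
    refine ⟨_, Finset.mem_map_of_mem _ hX, ?_⟩
    rw [Submodule.map_le_iff_le_comap] at hYX
    exact hYX.trans_eq (Submodule.map_equiv_eq_comap_symm e X).symm

end CoveringDesign

section CoveringNumber

variable {F : Type} {V : Type*} [Field F] [AddCommGroup V] [Module F V] [FiniteDimensional F V]
  {k r : ℕ}

lemma IsCoveringDesign.coveringNumber_le {S : Finset (Submodule F V)}
    (hS : IsCoveringDesign k r S) : coveringNumber F (finrank F V) k r ≤ S.card :=
  have hS' := hS.map (finBasis F V).equivFun
  Nat.sInf_le ⟨_, Finset.card_map _, hS'.finrank_eq, hS'.exists_le⟩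

variable (F V) in
lemma exists_isCoveringDesign_card_eq [Finite F] (hrk : r ≤ k) (hkV : k ≤ finrank F V) :
    ∃ S : Finset (Submodule F V),
      IsCoveringDesign k r S ∧ S.card = coveringNumber F (finrank F V) k r := by
  obtain ⟨S, hcard, hdim, hcov⟩ := Nat.sInf_mem (s := { m : ℕ | ∃ S : Finset (Submodule F
    (Fin (finrank F V) → F)), S.card = m ∧ (∀ X ∈ S, finrank F X = k) ∧
      ∀ Y : Submodule F (Fin (finrank F V) → F), finrank F Y = r → ∃ X ∈ S, Y ≤ X })
    ⟨_, grassmannian F _ k, rfl, fun X ↦ mem_grassmannian.1, fun Y hY ↦ by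
      obtain ⟨X, hYX, hX⟩ := exists_le_finrank_eq (hY.trans_le hrk) (hkV.trans_eq (by simp))
      exact ⟨X, mem_grassmannian.2 hX, hYX⟩⟩
  exact ⟨_, IsCoveringDesign.map ⟨hdim, hcov⟩ (finBasis F V).equivFun.symm,
    (Finset.card_map _).trans hcard⟩

end CoveringNumber

section FlagEmbedding

variable {F A E K : Type*} [Field F] [AddCommGroup A] [Module F A] [AddCommGroup E] [Module F E]
  [AddCommGroup K] [Module F K]

/-- A linear embedding of `A` into `E × K` with image `L × K`, under which the subspaces `U₀ ≤ U₁`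
of `A` correspond to `0 × K ≤ p × K`. -/
structure IsFlagEmbedding (φ : A →ₗ[F] E × K) (U₀ U₁ : Submodule F A) (p L : Submodule F E) :
    Prop where
  injective : Function.Injective φ
  range_eq : LinearMap.range φ = L.prod ⊤
  ker_fst_comp : LinearMap.ker (LinearMap.fst F E K ∘ₗ φ) = U₀
  comap_fst_comp : p.comap (LinearMap.fst F E K ∘ₗ φ) = U₁

variable {U₀ U₁ : Submodule F A} {p L : Submodule F E}

lemma exists_ker_eq_range_eq_comap_eq [FiniteDimensional F A] [FiniteDimensional F E]
    (hU : U₀ ≤ U₁) (hpL : p ≤ L) (hA : finrank F A = finrank F U₀ + finrank F L)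
    (hU₁ : finrank F U₁ = finrank F U₀ + finrank F p) :
    ∃ γ : A →ₗ[F] E, LinearMap.ker γ = U₀ ∧ LinearMap.range γ = L ∧ p.comap γ = U₁ := by
  have hquot : finrank F (A ⧸ U₀) = finrank F L := by
    have := U₀.finrank_quotient_add_finrank
    lia
  have hU₁quot : finrank F (U₁.map U₀.mkQ) = finrank F (p.submoduleOf L) := by
    have := finrank_map_add_finrank_ker_of_le U₀.mkQ (U₀.ker_mkQ.trans_le hU)
    rw [U₀.ker_mkQ] at this
    rw [(Submodule.submoduleOfEquivOfLe hpL).finrank_eq]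
    lia
  obtain ⟨e, he⟩ := exists_linearEquiv_map_eq hquot hU₁quot
  refine ⟨L.subtype ∘ₗ e.toLinearMap ∘ₗ U₀.mkQ, ?_, ?_, ?_⟩
  · ext x
    simp
  · simp [LinearMap.range_comp]
  · have comap_subtype : p.comap L.subtype = p.submoduleOf L := rfl
    rw [Submodule.comap_comp, Submodule.comap_comp, comap_subtype, ← he,
      Submodule.comap_map_eq_of_injective e.injective, Submodule.comap_map_mkQ,
      sup_eq_right.2 hU]

lemma exists_isFlagEmbedding [FiniteDimensional F A] [FiniteDimensional F E]
    [FiniteDimensional F K] (hU : U₀ ≤ U₁) (hpL : p ≤ L) (hU₀ : finrank F U₀ = finrank F K)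
    (hA : finrank F A = finrank F U₀ + finrank F L)
    (hU₁ : finrank F U₁ = finrank F U₀ + finrank F p) :
    ∃ φ : A →ₗ[F] E × K, IsFlagEmbedding φ U₀ U₁ p L := by
  obtain ⟨γ, ker_γ, range_γ, comap_γ⟩ := exists_ker_eq_range_eq_comap_eq hU hpL hA hU₁
  let e := LinearEquiv.ofFinrankEq U₀ K hU₀
  obtain ⟨ρ, hρ⟩ := LinearMap.exists_extend e.toLinearMap
  have ρ_apply (u : U₀) : ρ u = e u := LinearMap.congr_fun hρ u
  refine ⟨γ.prod ρ, ?_, le_antisymm ?_ ?_, ker_γ, comap_γ⟩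
  · refine (injective_iff_map_eq_zero _).2 fun a ha ↦ ?_
    obtain ⟨hγa, hρa⟩ := Prod.mk_eq_zero.1 ha
    have ha₀ : a ∈ U₀ := ker_γ.le hγa
    simpa [ρ_apply ⟨a, ha₀⟩] using hρa
  · rintro _ ⟨a, rfl⟩
    exact ⟨range_γ.le ⟨a, rfl⟩, trivial⟩
  · rintro ⟨x, y⟩ ⟨hx, -⟩
    obtain ⟨a, rfl⟩ := range_γ.ge hx
    obtain ⟨u, hu⟩ := e.surjective (y - ρ a)
    have hγu : γ u = 0 := ker_γ.ge u.2
    exact ⟨a + u, by simp [hγu, ρ_apply, hu]⟩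

namespace IsFlagEmbedding

variable {φ : A →ₗ[F] E × K} {Y : Submodule F (E × K)}

lemma map_comap_eq (hφ : IsFlagEmbedding φ U₀ U₁ p L) (hYL : Y.map (LinearMap.fst F E K) ≤ L) :
    (Y.comap φ).map φ = Y := by
  rw [Submodule.map_comap_eq, hφ.range_eq, inf_eq_right, Submodule.le_prod_iff]
  exact ⟨hYL, le_top⟩

lemma exists_le_map (hφ : IsFlagEmbedding φ U₀ U₁ p L) {k r : ℕ} {S : Finset (Submodule F A)}
    (hS : IsCoveringDesign k r S) (hY : finrank F Y = r)
    (hYL : Y.map (LinearMap.fst F E K) ≤ L) :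
    ∃ X ∈ S, Y.comap φ ≤ X ∧ Y ≤ X.map φ := by
  have hmap := hφ.map_comap_eq hYL
  obtain ⟨X, hX, hYX⟩ := hS.exists_le (Y.comap φ)
    (by rw [← finrank_map_eq_of_injective hφ.injective, hmap, hY])
  exact ⟨X, hX, hYX, hmap.ge.trans (Submodule.map_mono hYX)⟩

lemma finrank_add_le [FiniteDimensional F A] (hφ : IsFlagEmbedding φ U₀ U₁ p L)
    {U : Submodule F A} (hU₀U : U₀ ≤ U)
    (hYL : Y.map (LinearMap.fst F E K) ≤ L) (hYU : Y.comap φ ≤ U) :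
    finrank F (Y.map (LinearMap.fst F E K)) + finrank F U₀ ≤ finrank F U := by
  rw [← finrank_map_add_finrank_ker_of_le (LinearMap.fst F E K ∘ₗ φ)
    (hφ.ker_fst_comp.trans_le hU₀U), hφ.ker_fst_comp, Submodule.map_comp]
  gcongr
  exact Submodule.finrank_mono
    (Submodule.map_mono ((hφ.map_comap_eq hYL).ge.trans (Submodule.map_mono hYU)))

end IsFlagEmbedding

end FlagEmbedding

section Gabidulin

lemma exists_linearEquiv_field (F V : Type*) [Field F] [Finite F] [AddCommGroup V] [Module F V]
    [FiniteDimensional F V] [Nontrivial V] :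
    ∃ (L : Type) (_ : Field L) (_ : Algebra F L), Nonempty (V ≃ₗ[F] L) := by
  obtain ⟨p, _⟩ := CharP.exists F
  have : Fact p.Prime := ⟨CharP.char_is_prime F p⟩
  have : NeZero (finrank F V) := ⟨finrank_pos.ne'⟩
  exact ⟨FiniteField.Extension F p (finrank F V), inferInstance, inferInstance,
    ⟨LinearEquiv.ofFinrankEq _ _ (FiniteField.finrank_extension F p (finrank F V)).symm⟩⟩

section LinearizedPolynomial

variable (F L : Type*) [Field F] [Fintype F] [Field L] [Algebra F L]

/-- The linearized polynomial (or `q`-polynomial) `∑ i, aᵢ x ^ q ^ i` with coefficient vector `a`,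
as an `F`-linear endomorphism of `L`, where `q` is the cardinality of `F`. -/
noncomputable def linearizedPolynomial (r : ℕ) : (Fin r → L) →ₗ[F] L →ₗ[F] L :=
  (Fintype.linearCombination L fun i : Fin r ↦
    (FiniteField.frobeniusAlgHom F L).toLinearMap ^ (i : ℕ)).restrictScalars F

variable {F L} {r : ℕ}

lemma linearizedPolynomial_apply (a : Fin r → L) (x : L) :
    linearizedPolynomial F L r a x = ∑ i : Fin r, a i * x ^ Fintype.card F ^ (i : ℕ) := by
  simp [linearizedPolynomial, Fintype.linearCombination_apply, Module.End.coe_pow,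
    FiniteField.coe_frobeniusAlgHom, pow_iterate]

/-- Evaluating `q`-polynomials with `r` coefficients on an `r`-dimensional space is injective by
counting roots, hence bijective by comparing dimensions. -/
lemma exists_linearizedPolynomial_comp_eq [FiniteDimensional F L] {Y : Type*} [AddCommGroup Y]
    [Module F Y] [FiniteDimensional F Y] {u : Y →ₗ[F] L} (hu : Function.Injective u)
    (g : Y →ₗ[F] L) : ∃ a, linearizedPolynomial F L (finrank F Y) a ∘ₗ u = g := by
  have := Module.finite_of_finite F (M := Y)
  have := Fintype.ofFinite Y
  have hdim : finrank F (Fin (finrank F Y) → L) = finrank F (Y →ₗ[F] L) := by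
    rw [finrank_linearMap, finrank_pi_fintype, Finset.sum_const, Finset.card_univ, Fintype.card_fin,
      smul_eq_mul]
  refine (LinearMap.injective_iff_surjective_of_finrank_eq_finrank hdim
    (f := u.lcomp F L ∘ₗ linearizedPolynomial F L _)).1 ?_ g
  refine (injective_iff_map_eq_zero _).2 fun a ha ↦ ?_
  have hq : 1 < Fintype.card F := Fintype.one_lt_card
  let P : Polynomial L := ∑ i : Fin _, Polynomial.monomial (Fintype.card F ^ (i : ℕ)) (a i)
  have hP : P = 0 := by
    refine P.eq_zero_of_natDegree_lt_card_of_eval_eq_zero hu (fun y ↦ ?_) ?_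
    · simpa [P, Polynomial.eval_finsetSum, linearizedPolynomial_apply] using
        LinearMap.congr_fun ha y
    · rw [← Nat.card_eq_fintype_card, Module.natCard_eq_pow_finrank (K := F),
        Nat.card_eq_fintype_card]
      have hpos : 0 < Fintype.card F ^ finrank F Y := Nat.pow_pos Fintype.card_pos
      refine Nat.lt_of_le_pred hpos (Polynomial.natDegree_sum_le_of_forall_le _ _ fun i _ ↦ ?_)
      exact (Polynomial.natDegree_monomial_le _).trans
        (Nat.le_pred_of_lt (Nat.pow_lt_pow_right hq i.2))
  ext i
  simpa [P, Polynomial.finsetSum_coeff, Polynomial.coeff_monomial,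
    (Nat.pow_right_injective hq).eq_iff, Fin.val_inj] using
    congrArg (Polynomial.coeff · (Fintype.card F ^ (i : ℕ))) hP

end LinearizedPolynomial

/-- Gabidulin's maximum rank distance codes. -/
lemma exists_finset_le_graph (F E K : Type*) [Field F] [Finite F] [AddCommGroup E] [Module F E]
    [AddCommGroup K] [Module F K]
    [FiniteDimensional F E] [FiniteDimensional F K] [Nontrivial K]
    (hEK : finrank F E ≤ finrank F K) (r : ℕ) :
    ∃ C : Finset (E →ₗ[F] K), C.card ≤ Nat.card F ^ (r * finrank F K) ∧
      ∀ Y : Submodule F (E × K), finrank F Y = r →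
        finrank F (Y.map (LinearMap.fst F E K)) = r → ∃ f ∈ C, Y ≤ f.graph := by
  classical
  have := Fintype.ofFinite F
  obtain ⟨L, _, _, ⟨e⟩⟩ := exists_linearEquiv_field F K
  have : FiniteDimensional F L := e.finiteDimensional
  have := Module.finite_of_finite F (M := L)
  have := Fintype.ofFinite L
  obtain ⟨ψ, hψ⟩ := finrank_le_iff_exists_linearMap.1 (hEK.trans_eq e.finrank_eq)
  let code (a : Fin r → L) : E →ₗ[F] K := e.symm.toLinearMap ∘ₗ linearizedPolynomial F L r a ∘ₗ ψ
  refine ⟨Finset.univ.image code, ?_, ?_⟩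
  · calc (Finset.univ.image code).card
      _ ≤ Fintype.card (Fin r → L) := Finset.card_image_le
      _ = Nat.card F ^ (r * finrank F K) := by
        rw [Fintype.card_fun, Fintype.card_fin, ← Nat.card_eq_fintype_card (α := L),
          Module.natCard_eq_pow_finrank (K := F), ← e.finrank_eq, ← pow_mul, mul_comm]
  · rintro Y rfl hYr
    let π : Y →ₗ[F] E := LinearMap.fst F E K ∘ₗ Y.subtype
    have hπ : Function.Injective π := by
      have := Submodule.disjoint_ker_of_finrank_le (LinearMap.fst F E K) hYr.ge
      exact LinearMap.injective_domRestrict_iff.2 this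
    obtain ⟨a, ha⟩ := exists_linearizedPolynomial_comp_eq (u := ψ ∘ₗ π) (hψ.comp hπ)
      (e.toLinearMap ∘ₗ LinearMap.snd F E K ∘ₗ Y.subtype)
    refine ⟨code a, Finset.mem_image_of_mem _ (Finset.mem_univ a), fun y hy ↦ ?_⟩
    rw [LinearMap.mem_graph_iff, eq_comm, LinearMap.comp_apply]
    exact e.symm_apply_eq.2 (LinearMap.congr_fun ha ⟨y, hy⟩)

end Gabidulin

section Marking

variable {F V : Type*} [Field F] [AddCommGroup V] [Module F V]

lemma span_pair_inf_comap {T : End F V} {x : V}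
    (hx : LinearIndependent F ![x, T x, T (T x)]) :
    Submodule.span F {x, T x} ⊓ (Submodule.span F {x, T x}).comap T = F ∙ x := by
  refine le_antisymm ?_ ((Submodule.span_singleton_le_iff_mem _ _).2
    ⟨Submodule.mem_span_pair.2 ⟨1, 0, by simp⟩, Submodule.mem_span_pair.2 ⟨0, 1, by simp⟩⟩)
  rintro y ⟨hy, hTy⟩
  obtain ⟨a, b, rfl⟩ := Submodule.mem_span_pair.1 hy
  obtain ⟨c, d, hcd⟩ := Submodule.mem_span_pair.1 hTy
  have hb : b = 0 := by
    refine Fintype.linearIndependent_iff.1 hx ![-c, a - d, b] ?_ 2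
    simp only [map_add, map_smul] at hcd
    simp only [Fin.sum_univ_three, Matrix.cons_val]
    linear_combination (norm := module) -hcd
  simp [hb, Submodule.mem_span_singleton]

variable [Finite F] [FiniteDimensional F V]

variable (F V) in
/-- Multiplication by a primitive element of a field structure on `V`. -/
lemma exists_end_linearIndependent_pow : ∃ T : End F V, ∀ x ≠ 0,
    LinearIndependent F fun i : Fin (finrank F V) ↦ (T ^ (i : ℕ)) x := by
  rcases subsingleton_or_nontrivial V with _ | _
  · exact ⟨0, fun x hx ↦ (hx (Subsingleton.elim x 0)).elim⟩
  obtain ⟨L, _, _, ⟨e⟩⟩ := exists_linearEquiv_field F V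
  have : FiniteDimensional F L := e.finiteDimensional
  have := Module.finite_of_finite F (M := L)
  obtain ⟨θ, hθ⟩ := Field.exists_primitive_element_of_finite_top F L
  have hdeg : (minpoly F θ).natDegree = finrank F V := by
    rw [e.finrank_eq, ← IntermediateField.adjoin.finrank (Algebra.IsIntegral.isIntegral θ), hθ,
      IntermediateField.finrank_top']
  let T : End F V := e.symm.conj (LinearMap.mulLeft F θ)
  have T_pow (i : ℕ) (x : V) : (T ^ i) x = e.symm (θ ^ i * e x) := by
    induction i with
    | zero => simp
    | succ i ih =>
      rw [pow_succ', Module.End.mul_apply, ih]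
      simp [T, LinearEquiv.conj_apply_apply, pow_succ', mul_assoc]
  refine ⟨T, fun x hx ↦ ?_⟩
  have hpow := linearIndependent_pow (K := F) θ
  rw [hdeg] at hpow
  have := hpow.map' (e.symm.toLinearMap ∘ₗ LinearMap.mulRight F (e x)) (LinearMap.ker_eq_bot.2
    (e.symm.injective.comp (mul_left_injective₀ (by simpa))))
  simpa [Function.comp_def, T_pow] using this

/-- With `T` as above, `L` is marked at `L ⊓ L.comap T` if this is a point, so that the line through
`x` and `T x` is marked at `x`. -/
lemma exists_marking (hV : 3 ≤ finrank F V) : ∃ δ : Submodule F V → Submodule F V,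
    (∀ L : Submodule F V, finrank F L = 2 → δ L ≤ L ∧ finrank F (δ L) = 1) ∧
      ∀ p : Submodule F V, finrank F p = 1 → ∃ L : Submodule F V, finrank F L = 2 ∧ δ L = p := by
  obtain ⟨T, hT⟩ := exists_end_linearIndependent_pow F V
  have hT₃ (x : V) (hx : x ≠ 0) : LinearIndependent F ![x, T x, T (T x)] := by
    convert (hT x hx).comp (Fin.castLE hV) (Fin.castLE_injective hV) using 1
    ext i
    fin_cases i <;> simp [pow_two]
  have exists_mark (L : Submodule F V) (hL : finrank F L = 2) : ∃ p ≤ L, finrank F p = 1 ∧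
      (finrank F ↥(L ⊓ L.comap T) = 1 → p = L ⊓ L.comap T) := by
    by_cases hL₁ : finrank F ↥(L ⊓ L.comap T) = 1
    · exact ⟨_, inf_le_left, hL₁, fun _ ↦ rfl⟩
    · obtain ⟨x, hx, hxL⟩ := exists_span_singleton_le (hL.trans_ne two_ne_zero)
      exact ⟨F ∙ x, hxL, finrank_span_singleton hx, fun h ↦ (hL₁ h).elim⟩
  choose! δ hδ using exists_mark
  refine ⟨δ, fun L hL ↦ ⟨(hδ L hL).1, (hδ L hL).2.1⟩, fun p hp ↦ ?_⟩
  obtain ⟨x, hx, hxp⟩ := exists_span_singleton_le (hp.trans_ne one_ne_zero)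
  obtain rfl := Submodule.eq_of_le_of_finrank_eq hxp (by rw [hp, finrank_span_singleton hx])
  have hspan := span_pair_inf_comap (hT₃ x hx)
  have hL : finrank F (Submodule.span F {x, T x}) = 2 := by
    have hpair : LinearIndependent F ![x, T x] := by
      convert (hT₃ x hx).comp ![0, 1] (by decide) using 1
      ext i
      fin_cases i <;> rfl
    rw [← Matrix.range_cons_cons_empty x (T x) ![], finrank_span_eq_card hpair, Fintype.card_fin]
  exact ⟨_, hL, ((hδ _ hL).2.2 (by rw [hspan, hp])).trans hspan⟩

end Marking

section Pencil

variable {F A ι : Type*} [Field F] [AddCommGroup A] [Module F A]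

/-- The pencil condition of the construction: distinct subspaces `U i`, each of dimension one more
than `U₀`, that pairwise intersect in `U₀`. -/
structure IsPencil (U₀ : Submodule F A) (U : ι → Submodule F A) : Prop where
  le : ∀ i, U₀ ≤ U i
  finrank_eq : ∀ i, finrank F (U i) = finrank F U₀ + 1
  inf_le : Pairwise fun i j ↦ U i ⊓ U j ≤ U₀

lemma IsPencil.of_inf_eq [Nontrivial ι] {U₀ : Submodule F A} {U : ι → Submodule F A}
    (hdim : ∀ i, finrank F (U i) = finrank F U₀ + 1) (hinf : Pairwise fun i j ↦ U i ⊓ U j = U₀) :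
    IsPencil U₀ U where
  le i := by
    obtain ⟨j, hij⟩ := exists_ne i
    exact (hinf hij).ge.trans inf_le_right
  finrank_eq := hdim
  inf_le _ _ hij := (hinf hij).le

open scoped Classical in
/-- The blocks of `S` contained in `X`. -/
noncomputable def blocksIn (S : Finset (Submodule F A)) (X : Submodule F A) :
    Finset (Submodule F A) :=
  {Y ∈ S | Y ≤ X}

@[simp]
lemma mem_blocksIn {S : Finset (Submodule F A)} {X Y : Submodule F A} :
    Y ∈ blocksIn S X ↔ Y ∈ S ∧ Y ≤ X := by
  simp [blocksIn]

lemma ncard_blocksIn (S : Finset (Submodule F A)) (X : Submodule F A) :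
    {Y | Y ∈ S ∧ Y ≤ X}.ncard = (blocksIn S X).card := by
  rw [← Set.ncard_coe_finset]
  congr
  ext
  simp

lemma blocksIn_mono {S : Finset (Submodule F A)} {X X' : Submodule F A} (h : X ≤ X') :
    blocksIn S X ⊆ blocksIn S X' := fun _ hY ↦
  mem_blocksIn.2 ⟨(mem_blocksIn.1 hY).1, (mem_blocksIn.1 hY).2.trans h⟩

open scoped Classical in
/-- The blocks of `S` contained in none of the members of the pencil. -/
noncomputable def transversalBlocks (S : Finset (Submodule F A)) (U : ι → Submodule F A) :
    Finset (Submodule F A) :=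
  {X ∈ S | ∀ i, ¬X ≤ U i}

@[simp]
lemma mem_transversalBlocks {S : Finset (Submodule F A)} {U : ι → Submodule F A}
    {X : Submodule F A} : X ∈ transversalBlocks S U ↔ X ∈ S ∧ ∀ i, ¬X ≤ U i := by
  simp [transversalBlocks]

open scoped Classical in
lemma IsPencil.card_transversalBlocks_add [Fintype ι] [Nonempty ι] {U₀ : Submodule F A}
    {U : ι → Submodule F A} (hU : IsPencil U₀ U) (S : Finset (Submodule F A)) :
    (transversalBlocks S U).card + ∑ i, (blocksIn S (U i) \ blocksIn S U₀).card +
      (blocksIn S U₀).card = S.card := by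
  let B (i : ι) := blocksIn S (U i) \ blocksIn S U₀
  have hB : Set.PairwiseDisjoint (Finset.univ : Finset ι) B := fun i _ j _ hij ↦ by
    refine Finset.disjoint_left.2 fun X hi hj ↦ ?_
    simp only [B, Finset.mem_sdiff, mem_blocksIn, not_and] at hi hj
    exact hi.2 hi.1.1 ((le_inf hi.1.2 hj.1.2).trans (hU.inf_le hij))
  have hTB : Disjoint (transversalBlocks S U) (Finset.univ.biUnion B) :=
    Finset.disjoint_left.2 fun X hX hX' ↦ by
      obtain ⟨i, -, hi⟩ := Finset.mem_biUnion.1 hX'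
      exact (mem_transversalBlocks.1 hX).2 i (mem_blocksIn.1 (Finset.mem_sdiff.1 hi).1).2
  have hTBU₀ : Disjoint (transversalBlocks S U ∪ Finset.univ.biUnion B) (blocksIn S U₀) := by
    refine Finset.disjoint_union_left.2 ⟨Finset.disjoint_left.2 fun X hX hX' ↦ ?_,
      (Finset.disjoint_biUnion_left _ _ _).2 fun i _ ↦ Finset.sdiff_disjoint⟩
    exact (mem_transversalBlocks.1 hX).2 (Classical.arbitrary ι)
      ((mem_blocksIn.1 hX').2.trans (hU.le _))
  rw [← Finset.card_biUnion hB, ← Finset.card_union_of_disjoint hTB,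
    ← Finset.card_union_of_disjoint hTBU₀]
  congr 1
  ext X
  simp only [B, Finset.mem_union, Finset.mem_biUnion, Finset.mem_univ, true_and, Finset.mem_sdiff,
    mem_transversalBlocks, mem_blocksIn]
  grind

end Pencil

section Construction

variable {F A E K ι : Type*} [Field F] [AddCommGroup A] [Module F A]
  [AddCommGroup E] [Module F E] [AddCommGroup K] [Module F K]
  {k : ℕ} {S : Finset (Submodule F A)}
  {U₀ : Submodule F A} {U : ι → Submodule F A} {i₀ : ι} {p L : Submodule F E}
  {φ : A →ₗ[F] E × K} {Y : Submodule F (E × K)}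

lemma IsPencil.exists_mem_transversalBlocks [FiniteDimensional F A] (hU : IsPencil U₀ U)
    {r : ℕ} (hS : IsCoveringDesign k r S)
    (hφ : IsFlagEmbedding φ U₀ (U i₀) p L) (hY : finrank F Y = r)
    (hYL : Y.map (LinearMap.fst F E K) ≤ L)
    (hYdim : 2 ≤ finrank F (Y.map (LinearMap.fst F E K))) :
    ∃ X ∈ transversalBlocks S U, Y ≤ X.map φ := by
  obtain ⟨X, hX, hYX, hYφ⟩ := hφ.exists_le_map hS hY hYL
  refine ⟨X, mem_transversalBlocks.2 ⟨hX, fun i hXi ↦ ?_⟩, hYφ⟩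
  have := hφ.finrank_add_le (hU.le i) hYL (hYX.trans hXi)
  have := hU.finrank_eq i
  lia

open scoped Classical in
lemma IsPencil.exists_mem_transversalBlocks_or_blocksIn_sdiff (hU : IsPencil U₀ U)
    {r : ℕ} (hS : IsCoveringDesign k r S)
    (hφ : IsFlagEmbedding φ U₀ (U i₀) p L) (hpL : p ≤ L) (hp : p ≠ ⊥) (hY : finrank F Y = r)
    (hYp : Y.map (LinearMap.fst F E K) = p) :
    ∃ X, (X ∈ transversalBlocks S U ∨ X ∈ blocksIn S (U i₀) \ blocksIn S U₀) ∧ Y ≤ X.map φ := by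
  obtain ⟨X, hX, hYX, hYφ⟩ := hφ.exists_le_map hS hY (hYp.trans_le hpL)
  refine ⟨X, ?_, hYφ⟩
  have not_le : ¬Y.comap φ ≤ U₀ := fun h ↦ hp <| by
    rw [← hYp, ← hφ.map_comap_eq (hYp.trans_le hpL), ← Submodule.map_comp]
    exact le_bot_iff.1 (Submodule.map_le_iff_le_comap.2 (h.trans hφ.ker_fst_comp.ge))
  have le : Y.comap φ ≤ U i₀ := by
    rw [← hφ.comap_fst_comp, ← hYp, Submodule.comap_comp]
    exact Submodule.comap_mono (Submodule.le_comap_map _ _)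
  by_cases h : ∃ i, X ≤ U i
  · obtain ⟨i, hi⟩ := h
    obtain rfl : i = i₀ := by
      by_contra hne
      exact not_le ((le_inf (hYX.trans hi) le).trans (hU.inf_le hne))
    exact .inr (Finset.mem_sdiff.2 ⟨mem_blocksIn.2 ⟨hX, hi⟩,
      fun h ↦ not_le (hYX.trans (mem_blocksIn.1 h).2)⟩)
  · exact .inl (mem_transversalBlocks.2 ⟨hX, not_exists.1 h⟩)

open scoped Classical in
lemma IsPencil.exists_lineBlocks [Finite F] [FiniteDimensional F A] [FiniteDimensional F E]
    [FiniteDimensional F K] (hU : IsPencil U₀ U) (i₀ : ι) {r : ℕ} (hS : IsCoveringDesign k r S)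
    (hE : 3 ≤ finrank F E) (hU₀ : finrank F U₀ = finrank F K)
    (hA : finrank F A = finrank F K + 2) :
    ∃ B : Finset (Submodule F (E × K)), (∀ X ∈ B, finrank F X = k) ∧
      B.card ≤ (grassmannian F E 2).card * (transversalBlocks S U).card +
        (grassmannian F E 1).card * (blocksIn S (U i₀) \ blocksIn S U₀).card ∧
      ∀ Y : Submodule F (E × K), finrank F Y = r →
        (finrank F (Y.map (LinearMap.fst F E K)) = 1 ∨
          finrank F (Y.map (LinearMap.fst F E K)) = 2) → ∃ X ∈ B, Y ≤ X := by
  obtain ⟨δ, hδ, exists_line⟩ := exists_marking hE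
  have exists_embedding (L : Submodule F E) (hL : finrank F L = 2) :
      ∃ φ : A →ₗ[F] E × K, IsFlagEmbedding φ U₀ (U i₀) (δ L) L :=
    exists_isFlagEmbedding (hU.le i₀) (hδ L hL).1 hU₀ (by rw [hA, hU₀, hL])
      (by rw [hU.finrank_eq, (hδ L hL).2])
  choose! φ hφ using exists_embedding
  choose! ℓ hℓ δ_ℓ using exists_line
  let B₂ := (grassmannian F E 2 ×ˢ transversalBlocks S U).image fun LX ↦ LX.2.map (φ LX.1)
  let B₁ := (grassmannian F E 1 ×ˢ (blocksIn S (U i₀) \ blocksIn S U₀)).image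
    fun pX ↦ pX.2.map (φ (ℓ pX.1))
  have mem_B₂ {L : Submodule F E} {X} (hL : finrank F L = 2) (hX : X ∈ transversalBlocks S U) :
      X.map (φ L) ∈ B₂ ∪ B₁ :=
    Finset.mem_union_left _ (Finset.mem_image_of_mem (fun LX ↦ LX.2.map (φ LX.1))
      (Finset.mk_mem_product (mem_grassmannian.2 hL) hX))
  have mem_B₁ {p : Submodule F E} {X} (hp : finrank F p = 1)
      (hX : X ∈ blocksIn S (U i₀) \ blocksIn S U₀) :
      X.map (φ (ℓ p)) ∈ B₂ ∪ B₁ :=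
    Finset.mem_union_right _ (Finset.mem_image_of_mem (fun pX ↦ pX.2.map (φ (ℓ pX.1)))
      (Finset.mk_mem_product (mem_grassmannian.2 hp) hX))
  refine ⟨B₂ ∪ B₁, ?_, ?_, ?_⟩
  · simp only [B₂, B₁, Finset.mem_union, Finset.mem_image, Finset.mem_product, Prod.exists,
      mem_grassmannian, mem_transversalBlocks, Finset.mem_sdiff, mem_blocksIn]
    rintro _ (⟨L, X, ⟨hL, hX, -⟩, rfl⟩ | ⟨p, X, ⟨hp, ⟨hX, -⟩, -⟩, rfl⟩)
    · rw [finrank_map_eq_of_injective (hφ L hL).injective, hS.finrank_eq X hX]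
    · rw [finrank_map_eq_of_injective (hφ _ (hℓ p hp)).injective, hS.finrank_eq X hX]
  · refine (Finset.card_union_le _ _).trans (add_le_add ?_ ?_) <;>
      exact Finset.card_image_le.trans_eq (Finset.card_product _ _)
  · rintro Y hY (hY₁ | hY₂)
    · have hYℓ := hφ _ (hℓ _ hY₁)
      rw [δ_ℓ _ hY₁] at hYℓ
      have hℓ_le := (δ_ℓ _ hY₁).ge.trans (hδ _ (hℓ _ hY₁)).1
      obtain ⟨X, hX | hX, hYX⟩ := hU.exists_mem_transversalBlocks_or_blocksIn_sdiff hS hYℓ hℓ_le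
        (fun h ↦ by rw [h, finrank_bot] at hY₁; exact zero_ne_one hY₁) hY rfl
      · exact ⟨_, mem_B₂ (hℓ _ hY₁) hX, hYX⟩
      · exact ⟨_, mem_B₁ hY₁ hX, hYX⟩
    · obtain ⟨X, hX, hYX⟩ := hU.exists_mem_transversalBlocks hS (hφ _ hY₂) hY le_rfl hY₂.ge
      exact ⟨_, mem_B₂ hY₂ hX, hYX⟩

end Construction

section Bound

lemma finrank_graph {F E K : Type*} [Field F] [AddCommGroup E] [Module F E] [AddCommGroup K]
    [Module F K] (f : E →ₗ[F] K) : finrank F f.graph = finrank F E := by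
  rw [LinearMap.graph_eq_range_prod]
  exact LinearMap.finrank_range_of_inj fun _ _ h ↦ congrArg Prod.fst h

lemma IsCoveringDesign.exists_le_map_inr {F E K : Type*} [Field F] [AddCommGroup E] [Module F E]
    [AddCommGroup K] [Module F K] {k r : ℕ} {D : Finset (Submodule F K)}
    (hD : IsCoveringDesign k r D) {Y : Submodule F (E × K)} (hY : finrank F Y = r)
    (hY₀ : Y.map (LinearMap.fst F E K) = ⊥) : ∃ X ∈ D, Y ≤ X.map (LinearMap.inr F E K) := by
  have hmap : (Y.comap (LinearMap.inr F E K)).map (LinearMap.inr F E K) = Y := by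
    rw [Submodule.map_comap_eq, LinearMap.range_inr, inf_eq_right, LinearMap.le_ker_iff_map, hY₀]
  obtain ⟨X, hX, hYX⟩ := hD.exists_le (Y.comap (LinearMap.inr F E K))
    (by rw [← finrank_map_eq_of_injective (LinearMap.inr_injective (R := F) (M := E)), hmap, hY])
  exact ⟨X, hX, hmap.ge.trans (Submodule.map_mono hYX)⟩

open scoped Classical in
lemma coveringNumber_add_le {F : Type} {A E K ι : Type*} [Field F] [Finite F]
    [AddCommGroup A] [Module F A] [FiniteDimensional F A] [AddCommGroup E] [Module F E]
    [FiniteDimensional F E] [AddCommGroup K] [Module F K] [FiniteDimensional F K]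
    {S : Finset (Submodule F A)} {U₀ : Submodule F A} {U : ι → Submodule F A}
    (hS : IsCoveringDesign (finrank F E) 3 S) (hU : IsPencil U₀ U) (i₀ : ι)
    (hE : 3 ≤ finrank F E) (hEK : finrank F E ≤ finrank F K) (hU₀ : finrank F U₀ = finrank F K)
    (hA : finrank F A = finrank F K + 2) :
    coveringNumber F (finrank F E + finrank F K) (finrank F E) 3 ≤
      Nat.card F ^ (3 * finrank F K) +
        ((grassmannian F E 2).card * (transversalBlocks S U).card +
          (grassmannian F E 1).card * (blocksIn S (U i₀) \ blocksIn S U₀).card) +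
        coveringNumber F (finrank F K) (finrank F E) 3 := by
  have : Nontrivial K := Module.nontrivial_of_finrank_pos (R := F) (by lia)
  obtain ⟨C, hC, exists_graph⟩ := exists_finset_le_graph F E K hEK 3
  obtain ⟨B, hBdim, hB, exists_lineBlock⟩ := hU.exists_lineBlocks i₀ hS hE hU₀ hA
  obtain ⟨D, hD, hDcard⟩ := exists_isCoveringDesign_card_eq F K hE hEK
  let T := C.image LinearMap.graph ∪ B ∪ D.image (Submodule.map (LinearMap.inr F E K))
  have hT : IsCoveringDesign (finrank F E) 3 T := by
    refine ⟨?_, fun Y hY ↦ ?_⟩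
    · simp only [T, Finset.mem_union, Finset.mem_image]
      rintro _ ((⟨f, -, rfl⟩ | hX) | ⟨X, hX, rfl⟩)
      · exact finrank_graph f
      · exact hBdim _ hX
      · rw [finrank_map_eq_of_injective LinearMap.inr_injective, hD.finrank_eq X hX]
    · have hle := Submodule.finrank_map_le (LinearMap.fst F E K) Y
      obtain h₀ | h₁₂ | h₃ : finrank F (Y.map (LinearMap.fst F E K)) = 0 ∨
          (finrank F (Y.map (LinearMap.fst F E K)) = 1 ∨
            finrank F (Y.map (LinearMap.fst F E K)) = 2) ∨
          finrank F (Y.map (LinearMap.fst F E K)) = 3 := by lia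
      · obtain ⟨X, hX, hYX⟩ := hD.exists_le_map_inr hY (Submodule.finrank_eq_zero.1 h₀)
        exact ⟨_, Finset.mem_union_right _ (Finset.mem_image_of_mem _ hX), hYX⟩
      · obtain ⟨X, hX, hYX⟩ := exists_lineBlock Y hY h₁₂
        exact ⟨X, Finset.mem_union_left _ (Finset.mem_union_right _ hX), hYX⟩
      · obtain ⟨f, hf, hYf⟩ := exists_graph Y hY h₃
        exact ⟨f.graph, Finset.mem_union_left _ (Finset.mem_union_left _
          (Finset.mem_image_of_mem _ hf)), hYf⟩
  calc coveringNumber F (finrank F E + finrank F K) (finrank F E) 3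
    _ = coveringNumber F (finrank F (E × K)) (finrank F E) 3 := by rw [finrank_prod]
    _ ≤ T.card := hT.coveringNumber_le
    _ ≤ C.card + B.card + D.card := by
      refine (Finset.card_union_le _ _).trans (add_le_add ?_ Finset.card_image_le)
      exact (Finset.card_union_le _ _).trans (add_le_add_left Finset.card_image_le _)
    _ ≤ _ := by rw [hDcard]; gcongr

end Bound

theorem improved_CMRD_k3_general {F : Type} [Field F] [Finite F] {A ι : Type*} [AddCommGroup A]
    [Module F A] [FiniteDimensional F A] [Fintype ι] {n k : ℕ} (hk : 3 ≤ k) (hn : 2 * k ≤ n)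
    (hA : finrank F A = n - k + 2) {S : Finset (Submodule F A)} (hS : IsCoveringDesign k 3 S)
    {U₀ : Submodule F A} {U : ι → Submodule F A} (hU₀ : finrank F U₀ = n - k)
    (hU : IsPencil U₀ U) (i₀ : ι) :
    (coveringNumber F n k 3 : ℚ) ≤
      (Nat.card F : ℚ) ^ (3 * (n - k)) +
        ((Nat.card F : ℚ) ^ k - 1) * ((Nat.card F : ℚ) ^ (k - 1) - 1) /
            (((Nat.card F : ℚ) - 1) * ((Nat.card F : ℚ) ^ 2 - 1)) *
          (S.card - ∑ i, ((blocksIn S (U i)).card - (blocksIn S U₀).card : ℚ) -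
            (blocksIn S U₀).card) +
        ((Nat.card F : ℚ) ^ k - 1) / ((Nat.card F : ℚ) - 1) *
          ((blocksIn S (U i₀)).card - (blocksIn S U₀).card) +
        coveringNumber F (n - k) k 3 := by
  have : Nonempty ι := ⟨i₀⟩
  have hbound := coveringNumber_add_le (E := Fin k → F) (K := Fin (n - k) → F) (by simpa) hU i₀
    (by simpa) (by simp; lia) (by simpa) (by simpa)
  have hlines := cast_card_grassmannian_two (F := F) (V := Fin k → F) (by simp; lia)
  have hpoints := cast_card_grassmannian_one (F := F) (V := Fin k → F) (by simp; lia)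
  have hrel (i : ι) : ((blocksIn S (U i) \ blocksIn S U₀).card : ℚ) =
      (blocksIn S (U i)).card - (blocksIn S U₀).card :=
    Finset.cast_card_sdiff (blocksIn_mono (hU.le i))
  have hcount := congrArg (Nat.cast : ℕ → ℚ) (hU.card_transversalBlocks_add S)
  simp only [Nat.cast_add, Nat.cast_sum, hrel] at hcount
  rw [← Nat.cast_le (α := ℚ)] at hbound
  simp only [finrank_fin_fun, Nat.cast_add, Nat.cast_mul, Nat.cast_pow, hrel] at hbound
  rw [Nat.add_sub_of_le (by lia), hlines, hpoints, finrank_fin_fun] at hbound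
  rw [← hcount]
  linear_combination hbound

/-- The improved recursive construction from a lifted MRD code, for $r = 3$. -/
theorem improved_CMRD_k3 (n k : ℕ) (hk : 3 ≤ k) (hn : 2 * k ≤ n)
    (S : Finset (Submodule (ZMod 2) (Fin (n - k + 2) → ZMod 2)))
    (hdim : ∀ X ∈ S, finrank (ZMod 2) X = k)
    (hcov : ∀ Y : Submodule (ZMod 2) (Fin (n - k + 2) → ZMod 2),
      finrank (ZMod 2) Y = 3 → ∃ X ∈ S, Y ≤ X)
    (U : Fin 4 → Submodule (ZMod 2) (Fin (n - k + 2) → ZMod 2))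
    (hU0 : finrank (ZMod 2) (U 0) = n - k)
    (hUi : ∀ i : Fin 4, i ≠ 0 → finrank (ZMod 2) (U i) = n - k + 1)
    (hUij : ∀ i j : Fin 4, i ≠ 0 → j ≠ 0 → i ≠ j → U i ⊓ U j = U 0)
    (c : Fin 4 → ℕ)
    (hc : ∀ i : Fin 4,
      c i = {X : Submodule (ZMod 2) (Fin (n - k + 2) → ZMod 2) | X ∈ S ∧ X ≤ U i}.ncard)
    (hc12 : c 1 ≤ c 2) (hc23 : c 2 ≤ c 3) :
    (coveringNumber (ZMod 2) n k 3 : ℚ) ≤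
      2 ^ (3 * (n - k)) +
        ((2 ^ k - 1) * (2 ^ (k - 1) - 1) / 3 : ℚ) *
          ((S.card : ℚ) - c 1 - c 2 - c 3 + 2 * c 0) +
        (2 ^ k - 1) * ((c 1 : ℚ) - c 0) +
        (coveringNumber (ZMod 2) (n - k) k 3 : ℚ) := by
  have hS : IsCoveringDesign k 3 S := ⟨hdim, hcov⟩
  have hU : IsPencil (U 0) (U ∘ Fin.succ) :=
    .of_inf_eq (fun i ↦ (hUi _ i.succ_ne_zero).trans (by rw [hU0])) fun i j hij ↦
      hUij _ _ i.succ_ne_zero j.succ_ne_zero ((Fin.succ_injective _).ne hij)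
  have hbound := improved_CMRD_k3_general hk hn (by simp) hS hU0 hU 0
  have hq₁ : (2 - 1 : ℚ) = 1 := by norm_num
  have hq₂ : (2 ^ 2 - 1 : ℚ) = 3 := by norm_num
  simp only [ncard_blocksIn] at hc
  simp only [Nat.card_zmod, Nat.cast_ofNat, hq₁, hq₂, one_mul, div_one, Function.comp_apply,
    ← hc, Fin.sum_univ_three, Fin.succ_zero_eq_one, Fin.succ_one_eq_two,
    Fin.reduceSucc] at hbound
  linear_combination hbound
end

section
/- 𝒞_2(10, 5, 3) ≤ 45230; that is, there exists a set of at most 45230 five-dimensional F_2-subspaces of F_2^{10} such that every three-dimensional F_2-subspace of F_2^{10} is contained in at least one of them. -/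
open Module

/-!
Let `K/F` have degree `m` and let `q = |F|`. We cover the three-dimensional subspaces `U` of
`K × K`, sorting them by how they meet `S = 0 × K`.

* If `U` misses `S`, it is the graph of an `F`-linear map on a three-dimensional subspace of `K`.
  That map extends uniquely to a linearized polynomial `a x + b x^q + c x^(q²)`, so the `q^(3m)`
  graphs of such polynomials suffice (this is the Gabidulin code).
* If `U` neither misses `S` nor lies in it, let `P` be its first projection and `N` its
  intersection with `S`; their dimensions are `1` and `2` in some order. The alternating form
  `B(x, y) = x^q y - x y^q` sends a plane `L` to a subspace `B(L, L)` of dimension at most one.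
  For `x ≠ 0` the range of `B(x, ·)` has dimension at least `m - 1`, so it meets every plane. It
  follows that `P` lies in a plane `L` with `N ⊆ B(L, L) + ⟨b⟩` for some `b`. For each `L`, pulling
  back a spread of `F⁴` covers `K` by `q² + 1` subspaces `H` of codimension two containing
  `B(L, L)`. Hence `U` lies in one of the `q⁴` subspaces over `L` with fibre `H` given by a linear
  map `L → K / H`.
* Otherwise `U` lies in `S`.
-/

open Submodule

theorem coveringNumber_le_card {F : Type} {V I : Type*} [Field F] [AddCommGroup V] [Module F V]
    [FiniteDimensional F V] [Finite I] {k r : ℕ} (W : I → Submodule F V)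
    (hW : ∀ i, finrank F (W i) = k)
    (hcover : ∀ U : Submodule F V, finrank F U = r → ∃ i, U ≤ W i) :
    coveringNumber F (finrank F V) k r ≤ Nat.card I := by
  classical
  have := Fintype.ofFinite I
  let e : V ≃ₗ[F] (Fin (finrank F V) → F) := LinearEquiv.ofFinrankEq _ _ (by simp)
  let S := Finset.univ.image fun i => (W i).map e.toLinearMap
  have hS : S.card ≤ Nat.card I := Finset.card_image_le.trans_eq (by simp)
  refine le_trans (Nat.sInf_le ⟨S, rfl, ?_, fun Y hY => ?_⟩) hS
  · simpa [S] using fun i => (LinearEquiv.finrank_map_eq e (W i)).trans (hW i)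
  · obtain ⟨i, hi⟩ := hcover (Y.map e.symm.toLinearMap) (by rw [LinearEquiv.finrank_map_eq, hY])
    refine ⟨_, Finset.mem_image_of_mem _ (Finset.mem_univ i), ?_⟩
    exact (map_le_iff_le_comap.1 hi).trans_eq (map_equiv_eq_comap_symm e (W i)).symm

section VectorSpace

variable {F V W : Type*} [Field F] [AddCommGroup V] [Module F V] [AddCommGroup W] [Module F W]

theorem card_subspaces_mul_prod [Fintype F] [FiniteDimensional F V] {k : ℕ} (hk : k ≤ finrank F V) :
    Nat.card {L : Submodule F V // finrank F L = k} *
        ∏ i : Fin k, (Fintype.card F ^ k - Fintype.card F ^ (i : ℕ)) =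
      ∏ i : Fin k, (Fintype.card F ^ finrank F V - Fintype.card F ^ (i : ℕ)) := by
  have : Finite V := Module.finite_of_finite F
  have := Fintype.ofFinite {L : Submodule F V // finrank F L = k}
  let forget : (Σ L : {L : Submodule F V // finrank F L = k},
      {s : Fin k → L.1 // LinearIndependent F s}) → {s : Fin k → V // LinearIndependent F s} :=
    fun t => ⟨fun i => t.2.1 i, t.2.2.map' _ (ker_subtype _)⟩
  have span_forget (t) : span F (Set.range (forget t).1) = t.1.1 := by
    refine eq_of_le_of_finrank_eq (span_le.2 ?_) ?_
    · rintro _ ⟨i, rfl⟩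
      exact (t.2.1 i).2
    · rw [finrank_span_eq_card (forget t).2, Fintype.card_fin, t.1.2]
  have forget_bijective : Function.Bijective forget := by
    refine ⟨fun t t' h => ?_, fun s => ?_⟩
    · obtain ⟨⟨L, hL⟩, s⟩ := t
      obtain ⟨⟨L', hL'⟩, s'⟩ := t'
      obtain rfl : L = L' := by
        simpa only [h, span_forget] using (span_forget ⟨⟨L, hL⟩, s⟩).symm
      obtain rfl : s = s' := by
        ext i
        exact congr_fun (congr_arg Subtype.val h) i
      rfl
    · exact ⟨⟨⟨span F (Set.range s.1), by simp [finrank_span_eq_card s.2]⟩,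
        ⟨_, linearIndependent_span s.2⟩⟩, rfl⟩
  rw [← card_linearIndependent hk, ← Nat.card_eq_of_bijective forget forget_bijective,
    Nat.card_sigma, Finset.sum_congr rfl fun L _ => by rw [card_linearIndependent L.2.ge, L.2]]
  simp

theorem card_subspaces_finrank_two [Fintype F] [FiniteDimensional F V] (hV : 2 ≤ finrank F V) :
    Nat.card {L : Submodule F V // finrank F L = 2} =
      (Fintype.card F ^ finrank F V - 1) * (Fintype.card F ^ finrank F V - Fintype.card F) /
        ((Fintype.card F ^ 2 - 1) * (Fintype.card F ^ 2 - Fintype.card F)) := by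
  have hq : 1 < Fintype.card F := Fintype.one_lt_card
  have hbases : 0 < (Fintype.card F ^ 2 - 1) * (Fintype.card F ^ 2 - Fintype.card F) :=
    Nat.mul_pos (Nat.sub_pos_of_lt (Nat.one_lt_pow two_ne_zero hq))
      (Nat.sub_pos_of_lt (lt_self_pow₀ hq one_lt_two))
  refine (Nat.div_eq_of_eq_mul_left hbases ?_).symm
  simpa [Fin.prod_univ_two] using (card_subspaces_mul_prod hV).symm

theorem finrank_graph_s17 (f : V →ₗ[F] W) : finrank F f.graph = finrank F V := by
  rw [LinearMap.graph_eq_range_prod, LinearMap.finrank_range_of_inj]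
  exact fun x y h => congr_arg Prod.fst h

theorem finrank_map_fst_add_finrank_comap_inr [FiniteDimensional F V] [FiniteDimensional F W]
    (U : Submodule F (V × W)) :
    finrank F (U.map (LinearMap.fst F V W)) + finrank F (U.comap (LinearMap.inr F V W)) =
      finrank F U := by
  let fiber : U.comap (LinearMap.inr F V W) →ₗ[F] U :=
    (LinearMap.inr F V W).restrict fun _ h => h
  have fiber_injective : Function.Injective fiber := fun x y h =>
    Subtype.ext (congr_arg (fun u : U => u.1.2) h)
  have range_fiber :
      LinearMap.range fiber = LinearMap.ker ((LinearMap.fst F V W).domRestrict U) := by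
    ext ⟨⟨v, w⟩, hU⟩
    constructor
    · rintro ⟨x, hx⟩
      exact congr_arg (fun u : U => u.1.1) hx.symm
    · intro hv
      obtain rfl : v = 0 := hv
      exact ⟨⟨w, hU⟩, rfl⟩
  rw [← LinearMap.range_domRestrict, ← LinearMap.finrank_range_of_inj fiber_injective, range_fiber,
    LinearMap.finrank_range_add_finrank_ker]

theorem exists_le_sup_span_singleton {A N : Submodule F V} [FiniteDimensional F N]
    (h : finrank F N ≤ finrank F (A ⊓ N : Submodule F V) + 1) : ∃ b, N ≤ A ⊔ span F {b} := by
  by_cases hNA : N ≤ A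
  · exact ⟨0, by simpa using hNA⟩
  obtain ⟨b, hbN, hbA⟩ := SetLike.not_le_iff_exists.1 hNA
  have hlt : A ⊓ N < A ⊓ N ⊔ span F {b} := by
    rw [left_lt_sup, span_singleton_le_iff_mem]
    exact fun hb => hbA hb.1
  have hle : A ⊓ N ⊔ span F {b} ≤ N :=
    sup_le inf_le_right ((span_singleton_le_iff_mem _ _).2 hbN)
  refine ⟨b, ?_⟩
  rw [← eq_of_le_of_finrank_le hle (h.trans (finrank_lt_finrank_of_lt hlt))]
  exact sup_le_sup_right inf_le_left _

theorem exists_surjective_le_ker [FiniteDimensional F V] [FiniteDimensional F W]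
    {D : Submodule F V} (h : finrank F D + finrank F W ≤ finrank F V) :
    ∃ f : V →ₗ[F] W, Function.Surjective f ∧ D ≤ LinearMap.ker f := by
  obtain ⟨i, hi⟩ := (finrank_le_iff_exists_linearMap (R := F) (M := W) (M' := V ⧸ D)).1
    (by have := D.finrank_quotient_add_finrank; omega)
  obtain ⟨g, hg⟩ := i.exists_leftInverse_of_injective (LinearMap.ker_eq_bot.2 hi)
  refine ⟨g ∘ₗ D.mkQ, ?_, fun v hv => ?_⟩
  · exact (LinearMap.surjective_of_comp_eq_id _ _ hg).comp D.mkQ_surjective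
  · rw [LinearMap.mem_ker, LinearMap.comp_apply, mkQ_apply, (Quotient.mk_eq_zero D).2 hv, map_zero]

theorem finrank_map₂_self_le_one {B : V →ₗ[F] V →ₗ[F] W} (hB : B.IsAlt)
    {L : Submodule F V} (hL : finrank F L = 2) : finrank F (map₂ B L L) ≤ 1 := by
  have := finite_of_finrank_eq_succ hL
  obtain ⟨⟨x, hx⟩, hx0⟩ := finrank_pos_iff_exists_ne_zero.1 (hL ▸ Nat.two_pos : 0 < finrank F L)
  have hxL : span F {x} ⊓ L = span F {x} := inf_eq_left.2 ((span_singleton_le_iff_mem _ _).2 hx)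
  obtain ⟨y, hy⟩ := exists_le_sup_span_singleton (A := span F {x}) (N := L) (by
    rw [hxL, hL, finrank_span_singleton (by simpa using hx0)])
  rw [← span_insert] at hy
  have hspan : map₂ B L L ≤ span F {B x y} := by
    refine map₂_le.2 fun u hu v hv => ?_
    obtain ⟨a, b, rfl⟩ := mem_span_pair.1 (hy hu)
    obtain ⟨c, d, rfl⟩ := mem_span_pair.1 (hy hv)
    refine mem_span_singleton.2 ⟨a * d - b * c, ?_⟩
    simp only [map_add, map_smul, LinearMap.add_apply, LinearMap.smul_apply, hB.self_eq_zero,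
      ← hB.neg x y]
    module
  exact (finrank_mono hspan).trans (by simpa using finrank_span_le_card (R := F) {B x y})

theorem exists_comp_eq_of_ker_le_ker {X : Type*} [AddCommGroup X] [Module F X]
    {f : X →ₗ[F] V} {g : X →ₗ[F] W} (h : LinearMap.ker f ≤ LinearMap.ker g) :
    ∃ ψ : V →ₗ[F] W, ψ ∘ₗ f = g := by
  obtain ⟨ψ, hψ⟩ := LinearMap.exists_extend
    ((LinearMap.ker f).liftQ g h ∘ₗ f.quotKerEquivRange.symm.toLinearMap)
  refine ⟨ψ, LinearMap.ext fun x => ?_⟩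
  have hsymm : f.quotKerEquivRange.symm (f.rangeRestrict x) = (LinearMap.ker f).mkQ x :=
    f.quotKerEquivRange_symm_apply_image x _
  have := LinearMap.congr_fun hψ (f.rangeRestrict x)
  rwa [LinearMap.comp_apply, LinearMap.comp_apply, LinearEquiv.coe_coe, hsymm] at this

end VectorSpace

section Spread

variable {F V : Type*} [Field F] [Fintype F] [AddCommGroup V] [Module F V]

theorem exists_spread (t : ℕ) [NeZero t] (hV : finrank F V = 2 * t) :
    ∃ P : Fin (Fintype.card F ^ t + 1) → Submodule F V,
      (∀ i, finrank F (P i) = t) ∧ ∀ v, ∃ i, v ∈ P i := by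
  obtain ⟨p, _⟩ := CharP.exists F
  have : Fact p.Prime := ⟨CharP.char_is_prime F p⟩
  have : FiniteDimensional F V := finite_of_finrank_pos (by have := NeZero.pos t; omega)
  let E := FiniteField.Extension F p t
  have hE : finrank F E = t := FiniteField.finrank_extension F p t
  let e : V ≃ₗ[F] (Fin 2 → E) := LinearEquiv.ofFinrankEq _ _ (by simp [finrank_pi_fintype, hE, hV])
  have hcard : Nat.card (Projectivization E (Fin 2 → E)) = Fintype.card F ^ t + 1 := by
    rw [Projectivization.card_of_finrank_two E _ (by simp), FiniteField.natCard_extension,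
      Nat.card_eq_fintype_card]
  let point := (Finite.equivFinOfCardEq hcard).symm
  refine ⟨fun i => ((point i).submodule.restrictScalars F).map e.symm.toLinearMap,
    fun i => ?_, fun v => ?_⟩
  · rw [LinearEquiv.finrank_map_eq]
    change finrank F (point i).submodule = t
    rw [← finrank_mul_finrank F E, hE, Projectivization.finrank_submodule, mul_one]
  · obtain ⟨w, hw⟩ : ∃ w : Projectivization E (Fin 2 → E), e v ∈ w.submodule := by
      by_cases hv : e v = 0
      · exact ⟨point 0, hv ▸ zero_mem _⟩
      · exact ⟨.mk E (e v) hv, by simp [Submodule.mem_span_singleton_self]⟩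
    exact ⟨point.symm w, e v, by simpa using hw, by simp⟩

theorem exists_cover_finrank_quotient_eq [FiniteDimensional F V] (t : ℕ) [NeZero t]
    {D : Submodule F V} (hD : finrank F D + 2 * t ≤ finrank F V) :
    ∃ H : Fin (Fintype.card F ^ t + 1) → Submodule F V,
      (∀ i, finrank F (V ⧸ H i) = t) ∧ (∀ i, D ≤ H i) ∧ ∀ v, ∃ i, v ∈ H i := by
  have hW : finrank F (Fin (2 * t) → F) = 2 * t := by simp
  obtain ⟨P, hP, hcover⟩ := exists_spread (F := F) t hW
  obtain ⟨f, hf, hDf⟩ := exists_surjective_le_ker (hW.symm ▸ hD)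
  refine ⟨fun i => LinearMap.ker ((P i).mkQ ∘ₗ f), fun i => ?_, fun i => ?_, fun v => ?_⟩
  · have hquot := (P i).finrank_quotient_add_finrank
    rw [hP, hW] at hquot
    rw [(((P i).mkQ ∘ₗ f).quotKerEquivOfSurjective ((P i).mkQ_surjective.comp hf)).finrank_eq]
    omega
  · exact hDf.trans (LinearMap.ker_le_ker_comp _ _)
  · obtain ⟨i, hi⟩ := hcover (f v)
    exact ⟨i, by simpa using hi⟩

end Spread

section LiftSubspace

variable {F V W : Type*} [Field F] [AddCommGroup V] [Module F V] [AddCommGroup W] [Module F W]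

/-- The subspace of `V × W` lying over `L` with fibre `H`, with `ψ : L → W ⧸ H` selecting the coset
of `H` over each vector of `L`. It is built as the image of the corresponding subspace of `L × W`,
because `ψ` is defined on `L` only. -/
def liftSubspace (L : Submodule F V) (H : Submodule F W) (ψ : L →ₗ[F] W ⧸ H) :
    Submodule F (V × W) :=
  (LinearMap.ker (ψ ∘ₗ LinearMap.fst F L W - H.mkQ ∘ₗ LinearMap.snd F L W)).map
    (L.subtype.prodMap LinearMap.id)

theorem mem_liftSubspace {L : Submodule F V} {H : Submodule F W} {ψ : L →ₗ[F] W ⧸ H}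
    {w : V × W} : w ∈ liftSubspace L H ψ ↔ ∃ hw : w.1 ∈ L, ψ ⟨w.1, hw⟩ = H.mkQ w.2 := by
  constructor
  · rintro ⟨⟨v, w⟩, h, rfl⟩
    exact ⟨v.2, sub_eq_zero.1 h⟩
  · rintro ⟨hw, h⟩
    exact ⟨(⟨w.1, hw⟩, w.2), sub_eq_zero.2 h, rfl⟩

theorem finrank_liftSubspace [FiniteDimensional F V] [FiniteDimensional F W] (L : Submodule F V)
    (H : Submodule F W) (ψ : L →ₗ[F] W ⧸ H) :
    finrank F (liftSubspace L H ψ) = finrank F L + finrank F H := by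
  have hfst : (liftSubspace L H ψ).map (LinearMap.fst F V W) = L := by
    refine le_antisymm (map_le_iff_le_comap.2 fun w hw => (mem_liftSubspace.1 hw).1) fun v hv => ?_
    obtain ⟨w, hw⟩ := H.mkQ_surjective (ψ ⟨v, hv⟩)
    exact ⟨(v, w), mem_liftSubspace.2 ⟨hv, hw.symm⟩, rfl⟩
  have hinr : (liftSubspace L H ψ).comap (LinearMap.inr F V W) = H := by
    ext w
    have hzero (h : (0 : V) ∈ L) : ψ ⟨0, h⟩ = 0 := map_zero ψ
    simp [mem_liftSubspace, hzero, eq_comm (a := (0 : W ⧸ H))]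
  rw [← finrank_map_fst_add_finrank_comap_inr, hfst, hinr]

theorem exists_le_liftSubspace {L : Submodule F V} {H : Submodule F W} {U : Submodule F (V × W)}
    (hL : U.map (LinearMap.fst F V W) ≤ L) (hH : U.comap (LinearMap.inr F V W) ≤ H) :
    ∃ ψ : L →ₗ[F] W ⧸ H, U ≤ liftSubspace L H ψ := by
  obtain ⟨ψ, hψ⟩ := exists_comp_eq_of_ker_le_ker
    (f := (LinearMap.fst F V W).domRestrict U)
    (g := H.mkQ ∘ₗ (LinearMap.snd F V W).domRestrict U) (by
      rintro ⟨⟨v, w⟩, hU⟩ hv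
      obtain rfl : v = 0 := hv
      simpa using hH hU)
  exact ⟨ψ.domRestrict L, fun w hw => mem_liftSubspace.2
    ⟨hL (mem_map_of_mem hw), LinearMap.congr_fun hψ ⟨w, hw⟩⟩⟩

end LiftSubspace

section Linearized

variable {F K V : Type*} [Field F] [Fintype F] [Field K] [Algebra F K]
  [AddCommGroup V] [Module F V]

variable (F K) in
/-- The `F`-linear map of `K` given by the linearized polynomial `∑ i < r, a i * X ^ q ^ i`, where
`q = |F|`, as a `K`-linear function of its coefficient vector `a`. The graphs of these maps form the
Gabidulin part of the covering. -/
noncomputable def linearizedMap (r : ℕ) : (Fin r → K) →ₗ[K] K →ₗ[F] K :=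
  Fintype.linearCombination K fun i : Fin r =>
    (FiniteField.frobeniusAlgHom F K ^ (i : ℕ)).toLinearMap

theorem linearizedMap_apply {r : ℕ} (a : Fin r → K) (x : K) :
    linearizedMap F K r a x = ∑ i, a i * x ^ Fintype.card F ^ (i : ℕ) := by
  simp [linearizedMap, Fintype.linearCombination_apply, FiniteField.coe_frobeniusAlgHom,
    pow_iterate]

open Polynomial in
theorem finrank_ker_linearizedMap_lt [FiniteDimensional F K] {r : ℕ} {a : Fin r → K} (ha : a ≠ 0) :
    finrank F (LinearMap.ker (linearizedMap F K r a)) < r := by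
  by_contra! hr
  have : Finite K := Module.finite_of_finite F
  have hq : 1 < Fintype.card F := Fintype.one_lt_card
  let P : K[X] := ∑ i, C (a i) * X ^ Fintype.card F ^ (i : ℕ)
  let roots := (LinearMap.ker (linearizedMap F K r a) : Set K).toFinite.toFinset
  have hroots : Fintype.card F ^ r ≤ roots.card := by
    rw [← Set.ncard_eq_toFinset_card]
    change _ ≤ Nat.card (LinearMap.ker (linearizedMap F K r a))
    rw [natCard_eq_pow_finrank (K := F), Nat.card_eq_fintype_card]
    exact Nat.pow_le_pow_right hq.le hr
  have hdegree : P.degree < roots.card := by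
    refine lt_of_lt_of_le ?_ (Nat.cast_le.2 hroots)
    rw [← mem_degreeLT]
    refine sum_mem fun i _ => mem_degreeLT.2 ?_
    refine (degree_C_mul_X_pow_le _ _).trans_lt ?_
    exact Nat.cast_lt.2 (Nat.pow_lt_pow_right hq i.2)
  have hP : P = 0 := eq_zero_of_degree_lt_of_eval_finset_eq_zero roots hdegree fun x hx => by
    have hx : linearizedMap F K r a x = 0 := by simpa [roots] using hx
    simpa [P, eval_finsetSum, linearizedMap_apply] using hx
  refine ha (funext fun i => ?_)
  have hcoeff : P.coeff (Fintype.card F ^ (i : ℕ)) = a i := by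
    simp [P, coeff_C_mul, coeff_X_pow, Nat.pow_right_inj hq, Fin.val_inj]
  rw [← hcoeff, hP, coeff_zero, Pi.zero_apply]

theorem exists_linearizedMap_comp_eq [FiniteDimensional F K] {f : V →ₗ[F] K}
    (hf : Function.Injective f) (g : V →ₗ[F] K) :
    ∃ a, linearizedMap F K (finrank F V) a ∘ₗ f = g := by
  have : FiniteDimensional F V := FiniteDimensional.of_injective f hf
  let interpolate : (Fin (finrank F V) → K) →ₗ[F] V →ₗ[F] K :=
    LinearMap.lcomp F K f ∘ₗ (linearizedMap F K (finrank F V)).restrictScalars F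
  have interpolate_injective : Function.Injective interpolate := by
    refine (injective_iff_map_eq_zero _).2 fun a ha => by_contra fun ha0 => ?_
    have hrange : LinearMap.range f ≤ LinearMap.ker (linearizedMap F K _ a) :=
      LinearMap.range_le_ker_iff.2 ha
    have := finrank_mono hrange
    rw [LinearMap.finrank_range_of_inj hf] at this
    exact this.not_gt (finrank_ker_linearizedMap_lt ha0)
  refine (LinearMap.injective_iff_surjective_of_finrank_eq_finrank ?_).1 interpolate_injective g
  simp [finrank_pi_fintype, finrank_linearMap]

theorem exists_le_graph_linearizedMap [FiniteDimensional F K] {U : Submodule F (K × K)}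
    (hU : U.comap (LinearMap.inr F K K) = ⊥) :
    ∃ a, U ≤ (linearizedMap F K (finrank F U) a).graph := by
  have hfst : Function.Injective ((LinearMap.fst F K K).domRestrict U) := by
    refine (injective_iff_map_eq_zero _).2 fun ⟨⟨x, y⟩, hxy⟩ hx => ?_
    obtain rfl : x = 0 := hx
    obtain rfl : y = 0 := (Submodule.mem_bot F).1 (hU ▸ hxy : y ∈ ⊥)
    rfl
  obtain ⟨a, ha⟩ := exists_linearizedMap_comp_eq hfst ((LinearMap.snd F K K).domRestrict U)
  exact ⟨a, fun w hw => (LinearMap.congr_fun ha ⟨w, hw⟩).symm⟩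

variable (F K) in
/-- The `F`-bilinear form `(x, y) ↦ x ^ q * y - x * y ^ q` with `q = |F|`, the `2 × 2` Moore
determinant up to sign. It attaches to each plane `L` of `K` the subspace `map₂ (mooreForm F K) L L`
of dimension at most one. -/
noncomputable def mooreForm : K →ₗ[F] K →ₗ[F] K :=
  LinearMap.mul F K ∘ₗ (FiniteField.frobeniusAlgHom F K).toLinearMap -
    (LinearMap.mul F K).compl₂ (FiniteField.frobeniusAlgHom F K).toLinearMap

theorem mooreForm_apply (x y : K) :
    mooreForm F K x y = x ^ Fintype.card F * y - x * y ^ Fintype.card F := rfl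

theorem mooreForm_isAlt : (mooreForm F K).IsAlt := fun x => by
  rw [mooreForm_apply]
  ring

theorem finrank_ker_mooreForm_le_one [FiniteDimensional F K] {x : K} (hx : x ≠ 0) :
    finrank F (LinearMap.ker (mooreForm F K x)) ≤ 1 := by
  have hlin : mooreForm F K x = linearizedMap F K 2 ![x ^ Fintype.card F, -x] := by
    ext y
    simp [mooreForm_apply, linearizedMap_apply, sub_eq_add_neg]
  rw [hlin]
  exact Nat.le_of_lt_succ (finrank_ker_linearizedMap_lt fun h => hx (by simpa using congr_fun h 1))

theorem exists_mooreForm_mem [FiniteDimensional F K] {x : K} (hx : x ≠ 0) {N : Submodule F K}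
    (hN : 2 ≤ finrank F N) : ∃ y, mooreForm F K x y ∈ N ∧ mooreForm F K x y ≠ 0 := by
  have hker := finrank_ker_mooreForm_le_one (F := F) hx
  have hrank := LinearMap.finrank_range_add_finrank_ker (mooreForm F K x)
  have hsup := finrank_sup_add_finrank_inf_eq (LinearMap.range (mooreForm F K x)) N
  have hle := finrank_le (LinearMap.range (mooreForm F K x) ⊔ N)
  have hmeet : LinearMap.range (mooreForm F K x) ⊓ N ≠ ⊥ := one_le_finrank_iff.1 (by omega)
  obtain ⟨_, ⟨⟨y, rfl⟩, hyN⟩, hy0⟩ := exists_mem_ne_zero_of_ne_bot hmeet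
  exact ⟨y, hyN, hy0⟩

end Linearized

section Covering

variable {F K : Type*} [Field F] [Fintype F] [Field K] [Algebra F K]

theorem exists_plane_le_map₂_mooreForm_sup [FiniteDimensional F K] {P N : Submodule F K}
    (hP : P ≠ ⊥) (hN : N ≠ ⊥) (hPN : finrank F P + finrank F N = 3) :
    ∃ L : Submodule F K, finrank F L = 2 ∧ P ≤ L ∧
      ∃ b, N ≤ map₂ (mooreForm F K) L L ⊔ span F {b} := by
  have hP1 := one_le_finrank_iff.2 hP
  have hN1 := one_le_finrank_iff.2 hN
  obtain hP2 | hP1 : finrank F P = 2 ∨ finrank F P = 1 := by omega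
  · exact ⟨P, hP2, le_rfl, exists_le_sup_span_singleton (by omega)⟩
  obtain ⟨x, hxP, hx0⟩ := exists_mem_ne_zero_of_ne_bot hP
  obtain ⟨y, hyN, hy0⟩ := exists_mooreForm_mem hx0 (F := F) (N := N) (by omega)
  have hxy : LinearIndependent F ![x, y] := by
    refine (LinearIndependent.pair_iff' hx0).2 ?_
    rintro a rfl
    exact hy0 (by rw [map_smul, mooreForm_isAlt.self_eq_zero, smul_zero])
  have hxL : x ∈ span F {x, y} := subset_span (Set.mem_insert _ _)
  have hyL : y ∈ span F {x, y} := subset_span (Set.mem_insert_of_mem _ rfl)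
  have hmeet : map₂ (mooreForm F K) (span F {x, y}) (span F {x, y}) ⊓ N ≠ ⊥ :=
    (Submodule.ne_bot_iff _).2 ⟨_, ⟨apply_mem_map₂ _ hxL hyL, hyN⟩, hy0⟩
  refine ⟨span F {x, y}, ?_, ?_, exists_le_sup_span_singleton ?_⟩
  · rw [← Matrix.range_cons_cons_empty x y ![]]
    simpa using finrank_span_eq_card hxy
  · obtain rfl : span F {x} = P :=
      eq_of_le_of_finrank_eq ((span_singleton_le_iff_mem _ _).2 hxP)
        ((finrank_span_singleton hx0).trans hP1.symm)
    exact span_mono (Set.singleton_subset_iff.2 (Set.mem_insert _ _))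
  · have := one_le_finrank_iff.2 hmeet
    omega

theorem exists_liftSubspace_cover [FiniteDimensional F K] (hK : 5 ≤ finrank F K) :
    ∃ H : {L : Submodule F K // finrank F L = 2} → Fin (Fintype.card F ^ 2 + 1) → Submodule F K,
      (∀ L i, finrank F (K ⧸ H L i) = 2) ∧
      ∀ U : Submodule F (K × K), finrank F U = 3 → U.map (LinearMap.fst F K K) ≠ ⊥ →
        U.comap (LinearMap.inr F K K) ≠ ⊥ → ∃ L i ψ, U ≤ liftSubspace L.1 (H L i) ψ := by
  have hspread (L : {L : Submodule F K // finrank F L = 2}) :=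
    exists_cover_finrank_quotient_eq 2 (D := map₂ (mooreForm F K) L.1 L.1) (by
      have := finrank_map₂_self_le_one (mooreForm_isAlt (F := F) (K := K)) L.2
      omega)
  choose H hH hle hmem using hspread
  refine ⟨H, hH, fun U hU hP hN => ?_⟩
  obtain ⟨L, hL, hPL, b, hNb⟩ := exists_plane_le_map₂_mooreForm_sup hP hN
    ((finrank_map_fst_add_finrank_comap_inr U).trans hU)
  obtain ⟨i, hi⟩ := hmem ⟨L, hL⟩ b
  have hNH : U.comap (LinearMap.inr F K K) ≤ H ⟨L, hL⟩ i :=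
    hNb.trans (sup_le (hle ⟨L, hL⟩ i) ((span_singleton_le_iff_mem _ _).2 hi))
  obtain ⟨ψ, hψ⟩ := exists_le_liftSubspace hPL hNH
  exact ⟨⟨L, hL⟩, i, ψ, hψ⟩

variable {ι : Type*} (H : {L : Submodule F K // finrank F L = 2} → ι → Submodule F K)

/-- The indices of the covering of `K × K` built from a family `H L i` of fibres over the planes
`L`: coefficients of linearized polynomials, then data for `liftSubspace`, then one index for
`0 × K`. -/
abbrev CoverIndex : Type _ :=
  (Fin 3 → K) ⊕
    (Σ (L : {L : Submodule F K // finrank F L = 2}) (i : ι), L.1 →ₗ[F] K ⧸ H L i) ⊕ Unit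

/-- The members of the covering of `K × K`, see `CoverIndex`. -/
noncomputable def coverSubspace : CoverIndex H → Submodule F (K × K)
  | .inl a => (linearizedMap F K 3 a).graph
  | .inr (.inl ⟨L, i, ψ⟩) => liftSubspace L.1 (H L i) ψ
  | .inr (.inr ()) => LinearMap.range (LinearMap.inr F K K)

variable {H} [FiniteDimensional F K]

theorem finrank_coverSubspace (hH : ∀ L i, finrank F (K ⧸ H L i) = 2) (t : CoverIndex H) :
    finrank F (coverSubspace H t) = finrank F K := by
  match t with
  | .inl a => exact finrank_graph_s17 _
  | .inr (.inl ⟨L, i, ψ⟩) =>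
    exact (finrank_liftSubspace L.1 _ ψ).trans
      (by rw [L.2, ← hH L i, finrank_quotient_add_finrank])
  | .inr (.inr ()) => exact LinearMap.finrank_range_of_inj LinearMap.inr_injective

theorem exists_le_coverSubspace {U : Submodule F (K × K)} (hU : finrank F U = 3)
    (hcover : U.map (LinearMap.fst F K K) ≠ ⊥ → U.comap (LinearMap.inr F K K) ≠ ⊥ →
      ∃ L i ψ, U ≤ liftSubspace L.1 (H L i) ψ) :
    ∃ t, U ≤ coverSubspace H t := by
  by_cases hN : U.comap (LinearMap.inr F K K) = ⊥
  · obtain ⟨a, ha⟩ := hU ▸ exists_le_graph_linearizedMap hN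
    exact ⟨.inl a, ha⟩
  by_cases hP : U.map (LinearMap.fst F K K) = ⊥
  · exact ⟨.inr (.inr ()),
      (map_le_iff_le_comap.1 hP.le).trans_eq (LinearMap.range_inr F K K).symm⟩
  · obtain ⟨L, i, ψ, h⟩ := hcover hP hN
    exact ⟨.inr (.inl ⟨L, i, ψ⟩), h⟩

theorem card_coverIndex [Finite ι] (hH : ∀ L i, finrank F (K ⧸ H L i) = 2) :
    Nat.card (CoverIndex H) = Fintype.card F ^ (3 * finrank F K) +
      Nat.card {L : Submodule F K // finrank F L = 2} * (Nat.card ι * Fintype.card F ^ 4) + 1 := by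
  have : Finite K := Module.finite_of_finite F
  have (L : {L : Submodule F K // finrank F L = 2}) (i) : Finite (L.1 →ₗ[F] K ⧸ H L i) :=
    Module.finite_of_finite F
  have := Fintype.ofFinite {L : Submodule F K // finrank F L = 2}
  have := Fintype.ofFinite ι
  have hψ (L : {L : Submodule F K // finrank F L = 2}) (i) :
      Nat.card (L.1 →ₗ[F] K ⧸ H L i) = Fintype.card F ^ 4 := by
    rw [natCard_eq_pow_finrank (K := F), finrank_linearMap, L.2, hH, Nat.card_eq_fintype_card]
  have ha : Nat.card (Fin 3 → K) = Fintype.card F ^ (3 * finrank F K) := by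
    rw [natCard_eq_pow_finrank (K := F), finrank_pi_fintype, Nat.card_eq_fintype_card]
    simp
  simp [Nat.card_sum, Nat.card_sigma, hψ, ha, add_assoc]

end Covering

theorem coveringNumber_two_mul_finrank_le {F : Type} {K : Type*} [Field F] [Fintype F] [Field K]
    [Algebra F K] (hK : 5 ≤ finrank F K) :
    coveringNumber F (2 * finrank F K) (finrank F K) 3 ≤
      Fintype.card F ^ (3 * finrank F K) +
        Nat.card {L : Submodule F K // finrank F L = 2} *
          ((Fintype.card F ^ 2 + 1) * Fintype.card F ^ 4) + 1 := by
  have : FiniteDimensional F K := finite_of_finrank_pos (by omega)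
  have : Finite K := Module.finite_of_finite F
  obtain ⟨H, hH, hcover⟩ := exists_liftSubspace_cover hK
  have (L : {L : Submodule F K // finrank F L = 2}) (i) : Finite (L.1 →ₗ[F] K ⧸ H L i) :=
    Module.finite_of_finite F
  calc
    _ = coveringNumber F (finrank F (K × K)) (finrank F K) 3 := by rw [finrank_prod, two_mul]
    _ ≤ Nat.card (CoverIndex H) := coveringNumber_le_card _ (finrank_coverSubspace hH)
      fun U hU => exists_le_coverSubspace hU (hcover U hU)
    _ = _ := by rw [card_coverIndex hH, Nat.card_fin]

theorem bound_10_5_3_general (F : Type) [Field F] [Fintype F] {q m : ℕ} (hq : Fintype.card F = q)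
    (hm : 5 ≤ m) :
    coveringNumber F (2 * m) m 3 ≤
      q ^ (3 * m) +
        (q ^ m - 1) * (q ^ m - q) / ((q ^ 2 - 1) * (q ^ 2 - q)) * ((q ^ 2 + 1) * q ^ 4) + 1 := by
  obtain ⟨p, _⟩ := CharP.exists F
  have : Fact p.Prime := ⟨CharP.char_is_prime F p⟩
  have : NeZero m := ⟨by omega⟩
  have hK : finrank F (FiniteField.Extension F p m) = m := FiniteField.finrank_extension F p m
  have hbound := coveringNumber_two_mul_finrank_le (hK.symm ▸ hm)
  rwa [card_subspaces_finrank_two (by omega), hK, hq] at hbound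

/-- $\mathcal{C}_2(10,5,3) \le 45230$. -/
theorem bound_10_5_3 : coveringNumber (ZMod 2) 10 5 3 ≤ 45230 :=
  (bound_10_5_3_general (ZMod 2) (ZMod.card 2) le_rfl).trans (by norm_num)
end
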